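/- arXiv:2105.06848 — 3 statements merged into one kernel-verified Lean document; each statement's English description precedes it below -/
import Mathlib

section
/- Fix 1/2 < σ₀ < 1 and a nonnegative integer m. For almost all ω ∈ Ω = ∏_p γ_p (with product Haar measure), the Dirichlet series η̃_m(s, ω) = ∑_{n=2}^∞ Λ(n) ω(n) / (n^s (log n)^{m+1}) converges and defines a holomorphic function on the half-plane Re(s) > σ₀. -/
open Complex MeasureTheory Filter

noncomputable instance : MeasurableSpace Circle := borel Circle
instance : BorelSpace Circle := ⟨rfl⟩

/-- `ω(n) = ∏_{p^r ∥ n} ω(p)^r` for `ω` a point of `∏_p γ_p`. -/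
noncomputable def omegaMul (ω : Nat.Primes → Circle) (n : ℕ) : ℂ :=
  ∏ p ∈ n.primeFactors,
    if h : p.Prime then ((ω ⟨p, h⟩ : ℂ) ^ (n.factorization p)) else 1

/-!
A left-invariant probability measure on `∏_p γ_p` is the product of its marginals, by uniqueness of
Haar measure on a compact group, so the coordinates `ω(p)` are independent; they have mean zero and
modulus one. For fixed `σ > 1/2` the terms at primes therefore have summable variances, and
Kolmogorov's theorem (here via martingale convergence) gives almost sure convergence of their sum,
while the proper prime powers form an absolutely convergent series of size `∑_p p ^ (-2σ)`. Abel
summation turns bounded partial sums at one point into locally uniform convergence on the open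
half-plane to its right. Letting `σ` run through a sequence decreasing to `1/2` gives a single
full-measure set of `ω` that works on all of `Re s > 1/2`.
-/

open ProbabilityTheory
open scoped ArithmeticFunction.vonMangoldt Topology

section Independence

variable {Ω : Type*} {mΩ : MeasurableSpace Ω} {μ : Measure Ω}

lemma eLpNorm_one_le_sqrt_variance [IsProbabilityMeasure μ] {X : Ω → ℝ} (hX : MemLp X 2 μ)
    (hX₀ : μ[X] = 0) : eLpNorm X 1 μ ≤ ENNReal.ofReal √Var[X; μ] := by
  refine (eLpNorm_le_eLpNorm_of_exponent_le one_le_two hX.1).trans_eq ?_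
  rw [hX.eLpNorm_eq_integral_rpow_norm two_ne_zero ENNReal.ofNat_ne_top,
    variance_of_integral_eq_zero hX.1.aemeasurable hX₀, Real.sqrt_eq_rpow]
  simp

lemma martingale_sum_range_succ_of_iIndepFun {E : Type*} [NormedAddCommGroup E]
    [NormedSpace ℝ E] [CompleteSpace E] [SecondCountableTopology E] [MeasurableSpace E]
    [BorelSpace E] {X : ℕ → Ω → E} (hX : ∀ n, StronglyMeasurable (X n)) (hind : iIndepFun X μ)
    (hint : ∀ n, Integrable (X n) μ) (hmean : ∀ n, μ[X n] = 0) :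
    Martingale (fun n ↦ ∑ k ∈ Finset.range (n + 1), X k) (Filtration.natural X hX) μ := by
  have := hind.isProbabilityMeasure
  refine martingale_of_condExp_sub_eq_zero_nat (fun n ↦ ?_)
    (fun n ↦ integrable_finsetSum' _ fun k _ ↦ hint k) fun n ↦ ?_
  · exact Finset.stronglyMeasurable_sum _ fun k hk ↦
      ((Filtration.stronglyAdapted_natural hX) k).mono
        (Filtration.mono _ (Finset.mem_range_succ_iff.1 hk))
  · rw [Finset.sum_range_succ_sub_sum]
    filter_upwards [hind.condExp_natural_ae_eq_of_lt hX n.lt_succ_self] with ω hω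
    simp [hω, hmean]

theorem ae_exists_tendsto_sum_of_iIndepFun_real {X : ℕ → Ω → ℝ}
    (hX : ∀ n, StronglyMeasurable (X n)) (hind : iIndepFun X μ) (hL2 : ∀ n, MemLp (X n) 2 μ)
    (hmean : ∀ n, μ[X n] = 0) (hvar : Summable fun n ↦ Var[X n; μ]) :
    ∀ᵐ ω ∂μ, ∃ c, Tendsto (fun N ↦ ∑ n ∈ Finset.range N, X n ω) atTop (𝓝 c) := by
  have := hind.isProbabilityMeasure
  have hint n : Integrable (X n) μ := (hL2 n).integrable one_le_two
  have variance_le N : Var[∑ n ∈ Finset.range N, X n; μ] ≤ ∑' n, Var[X n; μ] := by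
    rw [IndepFun.variance_sum (fun n _ ↦ hL2 n) fun i _ j _ hij ↦ hind.indepFun hij]
    exact hvar.sum_le_tsum _ fun n _ ↦ variance_nonneg _ _
  have eLpNorm_le N : eLpNorm (∑ n ∈ Finset.range (N + 1), X n) 1 μ
      ≤ (√(∑' n, Var[X n; μ])).toNNReal := by
    refine (eLpNorm_one_le_sqrt_variance (memLp_finsetSum' _ fun n _ ↦ hL2 n) ?_).trans
      (ENNReal.ofReal_le_ofReal (Real.sqrt_le_sqrt (variance_le _)))
    simp [integral_finsetSum _ fun n _ ↦ hint n, hmean]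
  filter_upwards [(martingale_sum_range_succ_of_iIndepFun hX hind hint
    hmean).submartingale.exists_ae_tendsto_of_bdd eLpNorm_le] with ω ⟨c, hc⟩
  exact ⟨c, (tendsto_add_atTop_iff_nat 1).1 (by simpa using hc)⟩

lemma variance_le_integral_norm_sq [IsProbabilityMeasure μ] {E : Type*} [NormedAddCommGroup E]
    {X : Ω → E} {Y : Ω → ℝ}
    (hX : MemLp X 2 μ) (hY : AEStronglyMeasurable Y μ) (hYX : ∀ ω, |Y ω| ≤ ‖X ω‖) :
    Var[Y; μ] ≤ ∫ ω, ‖X ω‖ ^ 2 ∂μ :=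
  (variance_le_expectation_sq hY).trans <| integral_mono
    (hX.mono hY (.of_forall hYX)).integrable_sq hX.integrable_norm_pow' fun ω ↦
      sq_le_sq.2 (by simpa using hYX ω)

theorem ae_exists_tendsto_sum_of_iIndepFun_complex {X : ℕ → Ω → ℂ}
    (hX : ∀ n, StronglyMeasurable (X n)) (hind : iIndepFun X μ) (hL2 : ∀ n, MemLp (X n) 2 μ)
    (hmean : ∀ n, μ[X n] = 0) (hsq : Summable fun n ↦ ∫ ω, ‖X n ω‖ ^ 2 ∂μ) :
    ∀ᵐ ω ∂μ, ∃ c, Tendsto (fun N ↦ ∑ n ∈ Finset.range N, X n ω) atTop (𝓝 c) := by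
  have := hind.isProbabilityMeasure
  have ae_converges_comp (L : ℂ →L[ℝ] ℝ) (hL : ∀ z, |L z| ≤ ‖z‖) :
      ∀ᵐ ω ∂μ, ∃ c, Tendsto (fun N ↦ ∑ n ∈ Finset.range N, L (X n ω)) atTop (𝓝 c) := by
    have hLX n := L.continuous.comp_stronglyMeasurable (hX n)
    refine ae_exists_tendsto_sum_of_iIndepFun_real hLX
      (hind.comp (fun _ ↦ L) fun _ ↦ L.measurable) (fun n ↦ L.comp_memLp' (hL2 n)) (fun n ↦ ?_) ?_
    · simp [L.integral_comp_comm ((hL2 n).integrable one_le_two), hmean]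
    · exact hsq.of_nonneg_of_le (fun n ↦ variance_nonneg _ _) fun n ↦
        variance_le_integral_norm_sq (hL2 n) (hLX n).aestronglyMeasurable fun ω ↦ hL _
  filter_upwards [ae_converges_comp reCLM abs_re_le_norm,
    ae_converges_comp imCLM abs_im_le_norm] with ω ⟨x, hx⟩ ⟨y, hy⟩
  refine ⟨x + y * I, ?_⟩
  convert hx.ofReal.add (hy.ofReal.mul_const I) using 2 with N
  simp [← re_sum, ← im_sum, re_add_im]

end Independence

section ProductGroups

variable {ι : Type*} {G : ι → Type*} [∀ i, Group (G i)] [∀ i, MeasurableSpace (G i)]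

lemma isMulLeftInvariant_infinitePi [∀ i, MeasurableMul (G i)] (ν : ∀ i, Measure (G i))
    [∀ i, IsProbabilityMeasure (ν i)] [∀ i, (ν i).IsMulLeftInvariant] :
    (Measure.infinitePi ν).IsMulLeftInvariant where
  map_mul_left_eq_self g := by
    simpa [map_mul_left_eq_self] using!
      Measure.infinitePi_map_pi ν (f := fun i x ↦ g i * x) fun i ↦ measurable_const_mul (g i)

lemma eq_of_isMulLeftInvariant_of_isProbabilityMeasure {H : Type*} [Group H] [TopologicalSpace H]
    [IsTopologicalGroup H] [CompactSpace H] [MeasurableSpace H] [BorelSpace H] (μ ν : Measure H)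
    [IsProbabilityMeasure μ] [IsProbabilityMeasure ν] [μ.IsMulLeftInvariant]
    [ν.IsMulLeftInvariant] : μ = ν := by
  have isHaar (ρ : Measure H) [IsProbabilityMeasure ρ] [ρ.IsMulLeftInvariant] :
      ρ.IsHaarMeasure :=
    Measure.isHaarMeasure_of_isCompact_nonempty_interior ρ Set.univ isCompact_univ
      (by simp) (by simp) (by simp)
  have := isHaar μ
  have := isHaar ν
  exact Measure.isHaarMeasure_eq_of_isProbabilityMeasure μ ν

theorem iIndepFun_eval_of_isMulLeftInvariant [Countable ι] [∀ i, TopologicalSpace (G i)]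
    [∀ i, IsTopologicalGroup (G i)] [∀ i, CompactSpace (G i)]
    [∀ i, SecondCountableTopology (G i)] [∀ i, BorelSpace (G i)] (μ : Measure (∀ i, G i))
    [IsProbabilityMeasure μ] [μ.IsMulLeftInvariant] :
    iIndepFun (fun i (x : ∀ i, G i) ↦ x i) μ := by
  have (i : ι) : IsProbabilityMeasure (μ.map fun x ↦ x i) :=
    Measure.isProbabilityMeasure_map (measurable_pi_apply i).aemeasurable
  have (i : ι) : (μ.map fun x ↦ x i).IsMulLeftInvariant :=
    isMulLeftInvariant_map (Pi.evalMonoidHom G i).toMulHom (measurable_pi_apply i)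
      (Function.surjective_eval i)
  have := isMulLeftInvariant_infinitePi fun i ↦ μ.map fun x ↦ x i
  rw [iIndepFun_iff_map_fun_eq_infinitePi_map measurable_pi_apply, Measure.map_id']
  exact eq_of_isMulLeftInvariant_of_isProbabilityMeasure _ _

end ProductGroups

section Steinhaus

variable {ι : Type*} {μ : Measure (ι → Circle)} [μ.IsMulLeftInvariant]

lemma integral_circle_eval_eq_zero (i : ι) : ∫ ω, (ω i : ℂ) ∂μ = 0 :=
  integral_eq_zero_of_mul_left_eq_neg (g := -1) fun ω ↦ by simp

variable [Countable ι] [IsProbabilityMeasure μ]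

theorem ae_exists_tendsto_sum_mul_circle_eval {u : ℕ → ℂ} (hu : Summable fun n ↦ ‖u n‖ ^ 2)
    {g : ℕ → ι} (hg : g.Injective) :
    ∀ᵐ ω ∂μ, ∃ c, Tendsto (fun N ↦ ∑ n ∈ Finset.range N, u n * ω (g n)) atTop (𝓝 c) := by
  have hmeas n : Measurable fun z : Circle ↦ u n * z :=
    (measurable_const_mul _).comp (by fun_prop : Continuous fun z : Circle ↦ (z : ℂ)).measurable
  have hX n : Measurable fun ω : ι → Circle ↦ u n * (ω (g n) : ℂ) :=
    (hmeas n).comp (measurable_pi_apply (g n))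
  have hind : iIndepFun (fun n ω ↦ u n * (ω (g n) : ℂ)) μ :=
    ((iIndepFun_eval_of_isMulLeftInvariant μ).precomp hg).comp _ hmeas
  refine ae_exists_tendsto_sum_of_iIndepFun_complex (fun n ↦ (hX n).stronglyMeasurable) hind
    (fun n ↦ ?_) (fun n ↦ ?_) ?_
  · exact .of_bound (hX n).aestronglyMeasurable ‖u n‖ (.of_forall fun ω ↦ by simp [Circle.norm_coe])
  · simp [integral_const_mul, integral_circle_eval_eq_zero]
  · simpa [Circle.norm_coe] using hu

end Steinhaus

section UniformConvergence

theorem exists_tendstoUniformlyOn_sum_smul {α 𝕜 E : Type*} [NormedField 𝕜]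
    [NormedAddCommGroup E] [NormedSpace 𝕜 E] [CompleteSpace E] {f : ℕ → α → 𝕜} {b : ℕ → E}
    {u : ℕ → ℝ} {s : Set α} (hf : TendstoUniformlyOn f 0 atTop s) (hu : Summable u)
    (hfu : ∀ᶠ n in atTop, ∀ x ∈ s, ‖f (n + 1) x - f n x‖ ≤ u n)
    (hb : Bornology.IsBounded (Set.range fun N ↦ ∑ n ∈ Finset.range N, b n)) :
    ∃ g, TendstoUniformlyOn (fun N x ↦ ∑ n ∈ Finset.range N, f n x • b n) g atTop s := by
  obtain ⟨M, hM, hbM⟩ := hb.exists_pos_norm_le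
  set B : ℕ → E := fun N ↦ ∑ n ∈ Finset.range N, b n
  have norm_B_le N : ‖B N‖ ≤ M := hbM _ ⟨N, rfl⟩
  have boundary : TendstoUniformlyOn (fun N x ↦ f (N - 1) x • B N) 0 atTop s := by
    rw [Metric.tendstoUniformlyOn_iff] at hf ⊢
    intro ε hε
    filter_upwards [(tendsto_sub_atTop_nat 1).eventually (hf (ε / M) (by positivity))]
      with N hN x hx
    have hfN : ‖f (N - 1) x‖ < ε / M := by simpa using hN x hx
    calc dist 0 (f (N - 1) x • B N) = ‖f (N - 1) x‖ * ‖B N‖ := by rw [dist_zero_left, norm_smul]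
      _ ≤ ‖f (N - 1) x‖ * M := by gcongr; exact norm_B_le N
      _ < ε := (lt_div_iff₀ hM).1 hfN
  have variation : TendstoUniformlyOn
      (fun N x ↦ ∑ n ∈ Finset.range N, (f (n + 1) x - f n x) • B (n + 1))
      (fun x ↦ ∑' n, (f (n + 1) x - f n x) • B (n + 1)) atTop s := by
    refine tendstoUniformlyOn_tsum_nat_eventually (hu.mul_right M) ?_
    filter_upwards [hfu] with n hn x hx
    rw [norm_smul]
    exact mul_le_mul (hn x hx) (norm_B_le _) (norm_nonneg _) ((norm_nonneg _).trans (hn x hx))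
  refine ⟨_, (boundary.sub fun v hv ↦ (tendsto_sub_atTop_nat 1).eventually (variation v hv)).congr
    (.of_forall fun N x _ ↦ ?_)⟩
  exact (Finset.sum_range_by_parts (fun n ↦ f n x) b N).symm

lemma exists_tendstoLocallyUniformlyOn_of_locally {α β ι : Type*} [TopologicalSpace α]
    [UniformSpace β] [T2Space β] [Nonempty β] {F : ι → α → β} {p : Filter ι} [p.NeBot]
    {S : Set α} (h : ∀ x ∈ S, ∃ t ∈ 𝓝[S] x, ∃ g, TendstoUniformlyOn F g p t) :
    ∃ f, TendstoLocallyUniformlyOn F f p S := by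
  refine ⟨fun x ↦ limUnder p fun i ↦ F i x, fun v hv x hx ↦ ?_⟩
  obtain ⟨t, ht, g, hg⟩ := h x hx
  refine ⟨t, ht, (hg.congr_right fun y hy ↦ ?_) v hv⟩
  exact (hg.tendsto_at hy).limUnder_eq.symm

end UniformConvergence

section DirichletSeries

lemma norm_natCast_add_one_cpow_neg_sub_le {z : ℂ} (hz : -1 ≤ z.re) {n : ℕ} (hn : n ≠ 0) :
    ‖((n + 1 : ℕ) : ℂ) ^ (-z) - (n : ℂ) ^ (-z)‖ ≤ ‖z‖ * (n : ℝ) ^ (-(z.re + 1)) := by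
  have hn' : (0 : ℝ) < n := by positivity
  have hderiv (x : ℝ) (hx : x ∈ Set.Icc (n : ℝ) (n + 1)) :
      HasDerivWithinAt (fun t : ℝ ↦ (t : ℂ) ^ (-z)) (-z * (x : ℂ) ^ (-z - 1))
        (Set.Icc (n : ℝ) (n + 1)) x := by
    have hx' : (x : ℂ) ∈ slitPlane := ofReal_mem_slitPlane.2 (hn'.trans_le hx.1)
    simpa using ((hasDerivAt_id (x : ℂ)).cpow_const (c := -z) hx').comp_ofReal.hasDerivWithinAt
  have hbound (x : ℝ) (hx : x ∈ Set.Ico (n : ℝ) (n + 1)) :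
      ‖-z * (x : ℂ) ^ (-z - 1)‖ ≤ ‖z‖ * (n : ℝ) ^ (-(z.re + 1)) := by
    rw [norm_mul, norm_neg, norm_cpow_eq_rpow_re_of_pos (hn'.trans_le hx.1),
      show (-z - 1).re = -(z.re + 1) by simp; ring]
    exact mul_le_mul_of_nonneg_left
      (Real.rpow_le_rpow_of_nonpos hn' hx.1 (by linarith)) (norm_nonneg z)
  simpa using norm_image_sub_le_of_norm_deriv_le_segment' hderiv hbound (n + 1) (by simp)

lemma tendstoUniformlyOn_natCast_cpow_neg {d : ℝ} (hd : 0 < d) :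
    TendstoUniformlyOn (fun (n : ℕ) (z : ℂ) ↦ (n : ℂ) ^ (-z)) 0 atTop {z | d ≤ z.re} := by
  rw [Metric.tendstoUniformlyOn_iff]
  intro ε hε
  filter_upwards [((tendsto_rpow_neg_atTop hd).comp
    tendsto_natCast_atTop_atTop).eventually_lt_const hε, eventually_ge_atTop 1] with n hn hn1 z hz
  rw [Pi.zero_apply, dist_zero_left, norm_natCast_cpow_of_pos hn1, neg_re]
  exact (Real.rpow_le_rpow_of_exponent_le (mod_cast hn1) (neg_le_neg hz)).trans_lt hn

lemma term_eq_cpow_neg_sub_mul_term (a : ℕ → ℂ) (s s₀ : ℂ) (n : ℕ) :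
    LSeries.term a s n = (n : ℂ) ^ (-(s - s₀)) * LSeries.term a s₀ n := by
  rcases eq_or_ne n 0 with rfl | hn
  · simp
  · have hn' : (n : ℂ) ≠ 0 := mod_cast hn
    rw [LSeries.term_of_ne_zero hn, LSeries.term_of_ne_zero hn, neg_sub, cpow_sub _ _ hn',
      div_mul_div_cancel₀' (by simp [hn'])]

lemma exists_tendstoUniformlyOn_sum_term {a : ℕ → ℂ} {s₀ : ℂ}
    (ha : Bornology.IsBounded (Set.range fun N ↦ ∑ n ∈ Finset.range N, LSeries.term a s₀ n))
    {d : ℝ} (hd : 0 < d) (R : ℝ) :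
    ∃ g, TendstoUniformlyOn (fun N s ↦ ∑ n ∈ Finset.range N, LSeries.term a s n) g atTop
      {s | d ≤ (s - s₀).re ∧ ‖s - s₀‖ ≤ R} := by
  set t : Set ℂ := {s | d ≤ (s - s₀).re ∧ ‖s - s₀‖ ≤ R}
  have variation : ∀ᶠ n : ℕ in atTop, ∀ s ∈ t,
      ‖((n + 1 : ℕ) : ℂ) ^ (-(s - s₀)) - (n : ℂ) ^ (-(s - s₀))‖ ≤ R * (n : ℝ) ^ (-(d + 1)) := by
    filter_upwards [eventually_ge_atTop 1] with n hn s ⟨hds, hsR⟩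
    refine (norm_natCast_add_one_cpow_neg_sub_le (by linarith) (by lia)).trans ?_
    have hn' : (1 : ℝ) ≤ n := mod_cast hn
    have hR : 0 ≤ R := (norm_nonneg _).trans hsR
    gcongr
  obtain ⟨g, hg⟩ := exists_tendstoUniformlyOn_sum_smul (s := t)
    (((tendstoUniformlyOn_natCast_cpow_neg hd).comp (· - s₀)).mono fun _ hs ↦ hs.1)
    ((Real.summable_nat_rpow.2 (by linarith)).mul_left R) variation ha
  exact ⟨g, hg.congr (.of_forall fun N s _ ↦ Finset.sum_congr rfl fun n _ ↦
    (term_eq_cpow_neg_sub_mul_term a s s₀ n).symm)⟩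

theorem exists_differentiableOn_tendstoLocallyUniformlyOn_sum_term {a : ℕ → ℂ} {S : Set ℂ}
    (hS : IsOpen S) (ha : ∀ s ∈ S, ∃ s₀ : ℂ, s₀.re < s.re ∧
      Bornology.IsBounded (Set.range fun N ↦ ∑ n ∈ Finset.range N, LSeries.term a s₀ n)) :
    ∃ f, DifferentiableOn ℂ f S ∧ TendstoLocallyUniformlyOn
      (fun N s ↦ ∑ n ∈ Finset.range N, LSeries.term a s n) f atTop S := by
  obtain ⟨f, hf⟩ : ∃ f, TendstoLocallyUniformlyOn
      (fun N s ↦ ∑ n ∈ Finset.range N, LSeries.term a s n) f atTop S := by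
    refine exists_tendstoLocallyUniformlyOn_of_locally fun s hs ↦ ?_
    obtain ⟨s₀, hs₀, hbdd⟩ := ha s hs
    have hd : 0 < (s - s₀).re := by simpa using hs₀
    refine ⟨_, mem_nhdsWithin_of_mem_nhds ?_,
      exists_tendstoUniformlyOn_sum_term hbdd (half_pos hd) (‖s - s₀‖ + 1)⟩
    have hsub : Tendsto (· - s₀) (𝓝 s) (𝓝 (s - s₀)) := (continuous_sub_right s₀).tendsto s
    exact (((continuous_re.tendsto _).comp hsub).eventually_const_le (half_lt_self hd)).and
      (hsub.norm.eventually_le_const (lt_add_one _))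
  refine ⟨f, hf.differentiableOn (.of_forall fun N ↦ .fun_sum fun n _ s _ ↦ ?_) hS, hf⟩
  exact (LSeries.hasDerivAt_term a n s).differentiableAt.differentiableWithinAt

end DirichletSeries

section Primes

lemma sum_range_ite_eq_sum_range_count_nth {M : Type*} [AddCommMonoid M] (p : ℕ → Prop)
    [DecidablePred p] (f : ℕ → M) (N : ℕ) :
    ∑ n ∈ Finset.range N, (if p n then f n else 0) =
      ∑ k ∈ Finset.range (Nat.count p N), f (Nat.nth p k) := by
  induction N with
  | zero => simp
  | succ N ih =>
    rw [Finset.sum_range_succ, ih, Nat.count_succ]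
    split_ifs with hN
    · rw [Finset.sum_range_succ, Nat.nth_count hN]
    · simp

lemma norm_omegaMul (ω : Nat.Primes → Circle) (n : ℕ) : ‖omegaMul ω n‖ = 1 := by
  rw [omegaMul, norm_prod]
  refine Finset.prod_eq_one fun p _ ↦ ?_
  split_ifs <;> simp [Circle.norm_coe]

lemma omegaMul_of_prime (ω : Nat.Primes → Circle) {p : ℕ} (hp : p.Prime) :
    omegaMul ω p = ω ⟨p, hp⟩ := by
  simp [omegaMul, hp]

variable {μ : Measure (Nat.Primes → Circle)} [IsProbabilityMeasure μ] [μ.IsMulLeftInvariant]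

lemma ae_exists_tendsto_sum_primes_mul_omegaMul {c : ℕ → ℂ} (hc : Summable fun n ↦ ‖c n‖ ^ 2) :
    ∀ᵐ ω ∂μ, ∃ l, Tendsto
      (fun N ↦ ∑ n ∈ Finset.range N, if n.Prime then c n * omegaMul ω n else 0) atTop (𝓝 l) := by
  have hinj := Nat.nth_injective Nat.infinite_setOfPred_prime
  let nthPrime (k : ℕ) : Nat.Primes := ⟨Nat.nth Nat.Prime k, Nat.prime_nth_prime k⟩
  have nthPrime_injective : nthPrime.Injective := fun i j hij ↦ hinj (congrArg Subtype.val hij)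
  filter_upwards [ae_exists_tendsto_sum_mul_circle_eval (μ := μ) (hc.comp_injective hinj)
    nthPrime_injective] with ω ⟨l, hl⟩
  refine ⟨l, (hl.comp Nat.tendsto_primeCounting').congr fun N ↦ ?_⟩
  rw [sum_range_ite_eq_sum_range_count_nth]
  exact Finset.sum_congr rfl fun k _ ↦ by
    rw [omegaMul_of_prime ω (Nat.prime_nth_prime k)]

theorem ae_exists_tendsto_sum_mul_omegaMul {c : ℕ → ℂ} (hsq : Summable fun n ↦ ‖c n‖ ^ 2)
    (hnp : Summable fun n ↦ if n.Prime then 0 else ‖c n‖) :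
    ∀ᵐ ω ∂μ, ∃ l, Tendsto (fun N ↦ ∑ n ∈ Finset.range N, c n * omegaMul ω n) atTop (𝓝 l) := by
  filter_upwards [ae_exists_tendsto_sum_primes_mul_omegaMul (μ := μ) hsq] with ω ⟨l, hl⟩
  have hrest : Summable fun n ↦ if n.Prime then 0 else c n * omegaMul ω n :=
    .of_norm (hnp.congr fun n ↦ by split_ifs <;> simp [norm_omegaMul])
  refine ⟨l + _, (hl.add hrest.hasSum.tendsto_sum_nat).congr fun N ↦ ?_⟩
  rw [← Finset.sum_add_distrib]
  exact Finset.sum_congr rfl fun n _ ↦ by split_ifs <;> simp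

end Primes

section ProperPrimePowers

lemma summable_primes_pow_add_two_rpow_neg {σ : ℝ} (hσ : 1 / 2 < σ) :
    Summable fun x : Nat.Primes × ℕ ↦ ((x.1 ^ (x.2 + 2) : ℕ) : ℝ) ^ (-σ) := by
  have summable_primes : Summable fun p : Nat.Primes ↦ (p : ℝ) ^ (-(2 * σ)) :=
    Nat.Primes.summable_rpow.2 (by linarith)
  have summable_pow : Summable fun k : ℕ ↦ ((2 : ℝ) ^ (-σ)) ^ k :=
    summable_geometric_of_lt_one (by positivity)
      (Real.rpow_lt_one_of_one_lt_of_neg one_lt_two (by linarith))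
  refine (summable_primes.mul_of_nonneg summable_pow (fun _ ↦ by positivity)
    fun _ ↦ by positivity).of_nonneg_of_le (fun _ ↦ by positivity) fun ⟨p, k⟩ ↦ ?_
  have hp : (2 : ℝ) ≤ p := mod_cast p.2.two_le
  calc ((p ^ (k + 2) : ℕ) : ℝ) ^ (-σ)
      = (p : ℝ) ^ (-(2 * σ)) * ((p : ℝ) ^ (-σ)) ^ k := by
        rw [Nat.cast_pow, ← Real.rpow_natCast_mul (by positivity),
          ← Real.rpow_mul_natCast (by positivity), ← Real.rpow_add (by positivity)]
        congr 1
        push_cast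
        ring
    _ ≤ (p : ℝ) ^ (-(2 * σ)) * ((2 : ℝ) ^ (-σ)) ^ k := by
        gcongr ?_ * ?_ ^ k
        exact Real.rpow_le_rpow_of_nonpos two_pos hp (by linarith)

lemma summable_indicator_properPrimePow_rpow_neg {σ : ℝ} (hσ : 1 / 2 < σ) :
    Summable ({n : ℕ | IsPrimePow n ∧ ¬ n.Prime}.indicator fun n ↦ (n : ℝ) ^ (-σ)) := by
  have hinj : Function.Injective fun x : Nat.Primes × ℕ ↦ (x.1 : ℕ) ^ (x.2 + 2) := by
    rintro ⟨p, k⟩ ⟨q, l⟩ h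
    have := Nat.Primes.prodNatEquiv.injective (a₁ := (p, k + 1)) (a₂ := (q, l + 1))
      (Subtype.ext h)
    simpa using this
  refine (hinj.summable_iff fun n hn ↦ Set.indicator_of_notMem ?_ _).1 ?_
  · rintro ⟨hpow, hprime⟩
    obtain ⟨p, k, hp, hk, rfl⟩ := (isPrimePow_nat_iff n).1 hpow
    have hk1 : k ≠ 1 := by rintro rfl; exact hprime (by simpa using hp)
    exact hn ⟨(⟨p, hp⟩, k - 2), by simp [show k - 2 + 2 = k by lia]⟩
  · refine (summable_primes_pow_add_two_rpow_neg hσ).congr fun ⟨p, k⟩ ↦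
      (Set.indicator_of_mem (f := fun n : ℕ ↦ (n : ℝ) ^ (-σ)) ?_).symm
    exact ⟨p.2.isPrimePow.pow (by lia), Nat.Prime.not_prime_pow (by lia)⟩

end ProperPrimePowers

section RandomDirichletSeries

lemma norm_term_le_mul_rpow_neg {a : ℕ → ℂ} {C : ℝ} (ha : ∀ n, ‖a n‖ ≤ C) (s : ℂ) (n : ℕ) :
    ‖LSeries.term a s n‖ ≤ C * (n : ℝ) ^ (-s.re) := by
  have hC : 0 ≤ C := (norm_nonneg _).trans (ha 0)
  rw [LSeries.norm_term_eq]
  split_ifs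
  · positivity
  · rw [Real.rpow_neg n.cast_nonneg, ← div_eq_mul_inv]
    gcongr
    exact ha n

lemma summable_norm_term_sq {a : ℕ → ℂ} {C : ℝ} (ha : ∀ n, ‖a n‖ ≤ C) {s : ℂ}
    (hs : 1 / 2 < s.re) : Summable fun n ↦ ‖LSeries.term a s n‖ ^ 2 := by
  have hsum : Summable fun n : ℕ ↦ C ^ 2 * (n : ℝ) ^ (-(2 * s.re)) :=
    (Real.summable_nat_rpow.2 (by linarith)).mul_left _
  refine hsum.of_nonneg_of_le (fun _ ↦ by positivity) fun n ↦ ?_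
  calc ‖LSeries.term a s n‖ ^ 2 ≤ (C * (n : ℝ) ^ (-s.re)) ^ 2 := by
        gcongr
        exact norm_term_le_mul_rpow_neg ha s n
    _ = C ^ 2 * (n : ℝ) ^ (-(2 * s.re)) := by
        rw [mul_pow, ← Real.rpow_mul_natCast n.cast_nonneg]
        congr 2
        push_cast
        ring

lemma summable_norm_term_of_not_prime {a : ℕ → ℂ} {C : ℝ} (ha : ∀ n, ‖a n‖ ≤ C)
    (ha₀ : ∀ n, ¬ IsPrimePow n → a n = 0) {s : ℂ} (hs : 1 / 2 < s.re) :
    Summable fun n ↦ if n.Prime then 0 else ‖LSeries.term a s n‖ := by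
  refine ((summable_indicator_properPrimePow_rpow_neg hs).mul_left C).of_nonneg_of_le
    (fun n ↦ by split_ifs <;> positivity) fun n ↦ ?_
  by_cases hn : n ∈ {n : ℕ | IsPrimePow n ∧ ¬ n.Prime}
  · rw [Set.indicator_of_mem hn, if_neg hn.2]
    exact norm_term_le_mul_rpow_neg ha s n
  · rw [Set.indicator_of_notMem hn, mul_zero]
    split_ifs with hp
    · rfl
    · simp [LSeries.term, ha₀ n fun h ↦ hn ⟨h, hp⟩]

variable {μ : Measure (Nat.Primes → Circle)} [IsProbabilityMeasure μ] [μ.IsMulLeftInvariant]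

lemma ae_isBounded_range_sum_term_mul_omegaMul {a : ℕ → ℂ} {C : ℝ} (ha : ∀ n, ‖a n‖ ≤ C)
    (ha₀ : ∀ n, ¬ IsPrimePow n → a n = 0) {s : ℂ} (hs : 1 / 2 < s.re) :
    ∀ᵐ ω ∂μ, Bornology.IsBounded (Set.range fun N ↦
      ∑ n ∈ Finset.range N, LSeries.term (fun n ↦ a n * omegaMul ω n) s n) := by
  filter_upwards [ae_exists_tendsto_sum_mul_omegaMul (μ := μ) (summable_norm_term_sq ha hs)
    (summable_norm_term_of_not_prime ha ha₀ hs)] with ω ⟨l, hl⟩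
  convert Metric.isBounded_range_of_tendsto _ hl using 5 with N n
  simp only [LSeries.term]
  split_ifs <;> ring

theorem ae_exists_differentiableOn_tendstoLocallyUniformlyOn {a : ℕ → ℂ} {C : ℝ}
    (ha : ∀ n, ‖a n‖ ≤ C) (ha₀ : ∀ n, ¬ IsPrimePow n → a n = 0) :
    ∀ᵐ ω ∂μ, ∃ f, DifferentiableOn ℂ f {s | 1 / 2 < s.re} ∧ TendstoLocallyUniformlyOn
      (fun N s ↦ ∑ n ∈ Finset.range N, LSeries.term (fun n ↦ a n * omegaMul ω n) s n)
      f atTop {s | 1 / 2 < s.re} := by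
  obtain ⟨σ, -, hσ, σ_tendsto⟩ := exists_seq_strictAnti_tendsto (1 / 2 : ℝ)
  filter_upwards [ae_all_iff.2 fun k ↦ ae_isBounded_range_sum_term_mul_omegaMul (μ := μ) ha ha₀
    (s := σ k) (by simpa using hσ k)] with ω hω
  refine exists_differentiableOn_tendstoLocallyUniformlyOn_sum_term
    (isOpen_lt continuous_const continuous_re) fun s hs ↦ ?_
  obtain ⟨k, hk⟩ := (σ_tendsto.eventually_lt_const hs).exists
  exact ⟨σ k, by simpa using hk, hω k⟩

end RandomDirichletSeries

section Eta

lemma vonMangoldt_div_log_pow_succ_le (m n : ℕ) :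
    Λ n / Real.log n ^ (m + 1) ≤ (Real.log 2 ^ m)⁻¹ := by
  have hlog2 : 0 < Real.log 2 := Real.log_pos one_lt_two
  rcases lt_or_ge n 2 with hn | hn
  · rw [ArithmeticFunction.vonMangoldt_eq_zero_iff.2 fun h ↦ hn.not_ge h.two_le, zero_div]
    positivity
  · have hlog : Real.log 2 ≤ Real.log n := Real.log_le_log two_pos (mod_cast hn)
    have hlog0 : 0 < Real.log n := hlog2.trans_le hlog
    calc Λ n / Real.log n ^ (m + 1) ≤ Real.log n / Real.log n ^ (m + 1) := by
          gcongr
          exact ArithmeticFunction.vonMangoldt_le_log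
      _ = (Real.log n ^ m)⁻¹ := by
          rw [pow_succ]
          field_simp
      _ ≤ (Real.log 2 ^ m)⁻¹ := by gcongr

theorem random_eta_holomorphic_ae_general (m : ℕ) (μ : Measure (Nat.Primes → Circle))
    [IsProbabilityMeasure μ] [μ.IsMulLeftInvariant] :
    ∀ᵐ ω ∂μ, ∃ f : ℂ → ℂ,
      DifferentiableOn ℂ f {s : ℂ | 1 / 2 < s.re} ∧
      TendstoLocallyUniformlyOn
        (fun (N : ℕ) (s : ℂ) => ∑ n ∈ Finset.range N,
          (ArithmeticFunction.vonMangoldt n : ℂ) * omegaMul ω n /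
            ((n : ℂ) ^ s * (((Real.log n) ^ (m + 1) : ℝ) : ℂ)))
        f atTop {s : ℂ | 1 / 2 < s.re} := by
  set a : ℕ → ℂ := fun n ↦ (Λ n / Real.log n ^ (m + 1) : ℝ)
  have norm_a_le n : ‖a n‖ ≤ (Real.log 2 ^ m)⁻¹ := by
    rw [norm_real, Real.norm_of_nonneg (div_nonneg ArithmeticFunction.vonMangoldt_nonneg
      (pow_nonneg (Real.log_natCast_nonneg n) _))]
    exact vonMangoldt_div_log_pow_succ_le m n
  have a_eq_zero n (hn : ¬ IsPrimePow n) : a n = 0 := by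
    simp [a, ArithmeticFunction.vonMangoldt_eq_zero_iff.2 hn]
  filter_upwards [ae_exists_differentiableOn_tendstoLocallyUniformlyOn (μ := μ) norm_a_le
    a_eq_zero] with ω ⟨f, hf, hlim⟩
  refine ⟨f, hf, hlim.congr fun N s _ ↦ Finset.sum_congr rfl fun n _ ↦ ?_⟩
  rcases eq_or_ne n 0 with rfl | hn
  · simp
  · simp only [LSeries.term_of_ne_zero hn, a, ofReal_div]
    ring

end Eta

theorem random_eta_holomorphic_ae
    (σ₀ : ℝ) (hσ₀ : 1 / 2 < σ₀) (hσ₀' : σ₀ < 1) (m : ℕ)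
    (μ : Measure (Nat.Primes → Circle)) [IsProbabilityMeasure μ] [μ.IsHaarMeasure] :
    ∀ᵐ ω ∂μ, ∃ f : ℂ → ℂ,
      DifferentiableOn ℂ f {s : ℂ | σ₀ < s.re} ∧
      TendstoLocallyUniformlyOn
        (fun (N : ℕ) (s : ℂ) => ∑ n ∈ Finset.range N,
          (ArithmeticFunction.vonMangoldt n : ℂ) * omegaMul ω n /
            ((n : ℂ) ^ s * (((Real.log n) ^ (m + 1) : ℝ) : ℂ)))
        f atTop {s : ℂ | σ₀ < s.re} := by
  have hsub : {s : ℂ | σ₀ < s.re} ⊆ {s : ℂ | 1 / 2 < s.re} := fun _ hs ↦ hσ₀.trans hs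
  filter_upwards [random_eta_holomorphic_ae_general m μ] with ω ⟨f, hf, hlim⟩
  exact ⟨f, hf.mono hsub, hlim.mono hsub⟩
end

section
/- Let 0 < η and suppose M η < π where M > 0. Let f be an entire function of exponential type with limsup_{y → ∞} (log |f(iy)|)/y ≤ M and limsup_{y → ∞} (log |f(-iy)|)/y ≤ M. Let (ξ_n) be a sequence of positive reals with |ξ_m - ξ_n| ≥ (η/2)|m - n| for all m, n, and ξ_n / n → η. Then limsup_{n → ∞} (log |f(ξ_n)|)/ξ_n = limsup_{r → ∞} (log |f(r)|)/r. -/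
open Complex Filter

/-- `log(x)/r` valued in `EReal`, with the convention `log 0 = -∞`. -/
noncomputable def elogDiv (x r : ℝ) : EReal :=
  ((r⁻¹ : ℝ) : EReal) * (if x = 0 then ⊥ else ((Real.log x : ℝ) : EReal))

/-!
Replacing `f z` by `f z * exp (-c * z)` reduces the theorem to a gain in decay: if
`‖g z‖ ≤ C * exp (M * |im z|)` on the right half-plane and `g` decays exponentially along the nodes,
then `g` decays exponentially along the positive axis. To see this at a point `p`, rescale so that
the nodes in `[p / 2, 3 * p / 2]` become a small perturbation of the integers `|k| ≤ N`, and compare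
`g (p + η * z)`, damped by a Gaussian, with `sin (π * z)` on the boundary of a square: since
`M * η < π`, the damped function is smaller than the sine there by a factor `exp (-c * N)`, and
Lagrange interpolation at the nodes transports this gain to the centre of the square.

The gain depends only on the gap between the decay rate along the nodes and the exponent of `f` on
the axis. As long as that gap is bounded below, the exponent can be lowered by a fixed amount;
Phragmén-Lindelöf turns the improved bound on the axis into one on the half-plane, and the argument
repeats.
-/

section ExponentialGrowth

lemma elogDiv_le_iff {x r b : ℝ} (hx : 0 ≤ x) (hr : 0 < r) :
    elogDiv x r ≤ b ↔ x ≤ Real.exp (b * r) := by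
  rcases hx.eq_or_lt with rfl | hx
  · simp [elogDiv, EReal.coe_mul_bot_of_pos (inv_pos.2 hr), Real.exp_nonneg]
  · rw [elogDiv, if_neg hx.ne', ← EReal.coe_mul, EReal.coe_le_coe_iff, inv_mul_le_iff₀ hr,
      mul_comm r, Real.log_le_iff_le_exp hx]

variable {α : Type*} {l : Filter α} {F r : α → ℝ}

lemma eventually_le_exp_of_limsup_elogDiv_lt {c : ℝ} (hF : ∀ a, 0 ≤ F a)
    (hr : Tendsto r l atTop) (h : limsup (fun a => elogDiv (F a) (r a)) l < c) :
    ∀ᶠ a in l, F a ≤ Real.exp (c * r a) := by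
  filter_upwards [eventually_lt_of_limsup_lt h, hr.eventually_gt_atTop 0] with a ha hra
  exact (elogDiv_le_iff (hF a) hra).1 ha.le

lemma limsup_elogDiv_le {b C : ℝ} (hF : ∀ a, 0 ≤ F a) (hr : Tendsto r l atTop)
    (h : ∀ᶠ a in l, F a ≤ C * Real.exp (b * r a)) :
    limsup (fun a => elogDiv (F a) (r a)) l ≤ b := by
  refine EReal.le_of_forall_lt_iff_le.1 fun c hbc => limsup_le_of_le (h := ?_)
  have hC : ∀ᶠ a in l, C ≤ Real.exp ((c - b) * r a) :=
    (Real.tendsto_exp_atTop.comp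
      (hr.const_mul_atTop (sub_pos.2 (EReal.coe_lt_coe_iff.1 hbc)))).eventually_ge_atTop C
  filter_upwards [h, hC, hr.eventually_gt_atTop 0] with a ha hCa hra
  refine (elogDiv_le_iff (hF a) hra).2 (ha.trans ?_)
  calc C * Real.exp (b * r a) ≤ Real.exp ((c - b) * r a) * Real.exp (b * r a) := by gcongr
    _ = Real.exp (c * r a) := by rw [← Real.exp_add]; ring_nf

lemma exists_forall_le_mul_exp_of_eventually {F : ℝ → ℝ} {A B C c : ℝ}
    (hexp : ∀ y, 0 ≤ y → F y ≤ A * Real.exp (B * y))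
    (h : ∀ᶠ y in atTop, F y ≤ C * Real.exp (c * y)) :
    ∃ K, ∀ y, 0 ≤ y → F y ≤ K * Real.exp (c * y) := by
  obtain ⟨Y, hY⟩ := eventually_atTop.1 h
  refine ⟨max C (|A| * Real.exp (|B - c| * |Y|)), fun y hy => ?_⟩
  rcases le_total Y y with hYy | hyY
  · exact (hY y hYy).trans (by gcongr; exact le_max_left _ _)
  · have hexponent : B * y ≤ |B - c| * |Y| + c * y := by
      have : (B - c) * y ≤ |B - c| * |Y| :=
        mul_le_mul (le_abs_self _) (hyY.trans (le_abs_self _)) hy (abs_nonneg _)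
      linarith
    calc F y ≤ A * Real.exp (B * y) := hexp y hy
      _ ≤ |A| * Real.exp (|B - c| * |Y| + c * y) := by gcongr; exact le_abs_self A
      _ = |A| * Real.exp (|B - c| * |Y|) * Real.exp (c * y) := by rw [Real.exp_add]; ring
      _ ≤ _ := by gcongr; exact le_max_right _ _

lemma exists_norm_le_mul_exp_of_limsup_le_lt {f : ℂ → ℂ} {A B M M' : ℝ} {θ : ℝ → ℂ} (hM : M < M')
    (hθ : ∀ y, 0 ≤ y → ‖f (θ y)‖ ≤ A * Real.exp (B * y))
    (h : limsup (fun y : ℝ => elogDiv ‖f (θ y)‖ y) atTop ≤ (M : EReal)) :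
    ∃ K, ∀ y, 0 ≤ y → ‖f (θ y)‖ ≤ K * Real.exp (M' * y) := by
  refine exists_forall_le_mul_exp_of_eventually (C := 1) hθ ?_
  simpa only [one_mul, id_eq] using eventually_le_exp_of_limsup_elogDiv_lt (fun _ => norm_nonneg _)
    tendsto_id (h.trans_lt (EReal.coe_lt_coe_iff.2 hM))

lemma descend_to_of_forall_sub {p : ℝ → Prop} {a b δ : ℝ} (hδ : 0 < δ)
    (hmono : ∀ ⦃x y⦄, x ≤ y → p x → p y) (hstep : ∀ x, a ≤ x → p x → p (x - δ)) (hb : p b) :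
    p a := by
  have key : ∀ (k : ℕ) (x : ℝ), x ≤ a + k * δ → p x → p a := by
    intro k
    induction k with
    | zero => intro x hx hpx; exact hmono (by simpa using hx) hpx
    | succ k ih =>
      intro x hx hpx
      rcases le_total x a with hxa | hax
      · exact hmono hxa hpx
      · refine ih (x - δ) ?_ (hstep x hax hpx)
        push_cast at hx
        linarith
  obtain ⟨k, hk⟩ := exists_nat_ge ((b - a) / δ)
  refine key k b ?_ hb
  rw [div_le_iff₀ hδ] at hk
  linarith

lemma one_add_div_pow_le_exp {a b s : ℝ} {k : ℕ} (ha : 0 ≤ a) (hb : 0 ≤ b) (hs : 0 ≤ s)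
    (h : k * a ≤ s * b) : (1 + a / b) ^ k ≤ Real.exp s := by
  calc (1 + a / b) ^ k ≤ Real.exp (a / b) ^ k := by
        gcongr
        linarith [Real.add_one_le_exp (a / b)]
    _ = Real.exp (k * a / b) := by rw [← Real.exp_nat_mul, mul_div_assoc]
    _ ≤ Real.exp s := Real.exp_le_exp.2 (div_le_of_le_mul₀ hb hs h)

lemma sqrt_le_sqrt_mul_of_le_mul_sq {u c t : ℝ} (hc : 0 ≤ c) (ht : 0 ≤ t) (h : u ≤ c * t ^ 2) :
    √u ≤ √c * t := by
  refine (Real.sqrt_le_sqrt h).trans_eq ?_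
  rw [Real.sqrt_mul hc, Real.sqrt_sq ht]

lemma eight_pow_le_exp (k : ℕ) : (8 : ℝ) ^ k ≤ Real.exp (3 * k) := by
  have h8 : (8 : ℝ) ≤ Real.exp 3 := by
    calc (8 : ℝ) = 2 ^ 3 := by norm_num
      _ ≤ Real.exp 1 ^ 3 := by gcongr; linarith [Real.add_one_le_exp (1 : ℝ)]
      _ = Real.exp 3 := by rw [← Real.exp_nat_mul]; norm_num
  rw [mul_comm, Real.exp_nat_mul]
  gcongr

end ExponentialGrowth

section IntegerWindows

@[to_additive]
lemma prod_Icc_neg_succ {M : Type*} [CommMonoid M] (f : ℤ → M) (n : ℕ) :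
    ∏ k ∈ Finset.Icc (-((n + 1 : ℕ) : ℤ)) (n + 1 : ℕ), f k =
      f (n + 1) * f (-(n + 1)) * ∏ k ∈ Finset.Icc (-(n : ℤ)) n, f k := by
  have hset : Finset.Icc (-((n + 1 : ℕ) : ℤ)) (n + 1 : ℕ) =
      insert ((n : ℤ) + 1) (insert (-((n : ℤ) + 1)) (Finset.Icc (-(n : ℤ)) n)) := by
    ext k
    simp only [Finset.mem_Icc, Finset.mem_insert]
    omega
  rw [hset, Finset.prod_insert, Finset.prod_insert, mul_assoc]
  all_goals simp only [Finset.mem_Icc, Finset.mem_insert]; omega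

lemma prod_Icc_abs_add_one (n : ℕ) :
    ∏ k ∈ Finset.Icc (-(n : ℤ)) n, (|(k : ℝ)| + 1) = ((n + 1).factorial : ℝ) ^ 2 := by
  induction n with
  | zero => simp
  | succ n ih =>
    rw [prod_Icc_neg_succ, ih, Nat.factorial_succ (n + 1)]
    have : |((n : ℝ) + 1)| = n + 1 := abs_of_nonneg (by positivity)
    push_cast
    rw [abs_neg, this]
    ring

lemma inv_sqrt_add_one_le {r : ℝ} (hr : 0 ≤ r) : 1 / √(r + 1) ≤ 2 * (√(r + 1) - √r) := by
  have h1 : 0 < √(r + 1) := Real.sqrt_pos.2 (by linarith)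
  rw [div_le_iff₀ h1]
  nlinarith [Real.sq_sqrt hr, Real.sq_sqrt (by linarith : (0 : ℝ) ≤ r + 1),
    sq_nonneg (√(r + 1) - √r)]

lemma sum_Icc_inv_sqrt_abs_add_one_le (n : ℕ) :
    ∑ k ∈ Finset.Icc (-(n : ℤ)) n, 1 / √(|(k : ℝ)| + 1) ≤ 4 * √(n + 1) := by
  induction n with
  | zero => norm_num
  | succ n ih =>
    have hn : |((n : ℝ) + 1)| = n + 1 := abs_of_nonneg (by positivity)
    have hstep := inv_sqrt_add_one_le (r := n + 1) (by positivity)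
    rw [sum_Icc_neg_succ]
    push_cast
    rw [abs_neg, hn]
    linarith

lemma one_add_le_exp_two_mul_sqrt {y : ℝ} (hy : 0 ≤ y) : 1 + y ≤ Real.exp (2 * √y) := by
  calc 1 + y ≤ (1 + √y) ^ 2 := by nlinarith [Real.sq_sqrt hy, Real.sqrt_nonneg y]
    _ ≤ Real.exp (√y) ^ 2 := by
      gcongr
      linarith [Real.add_one_le_exp (√y)]
    _ = Real.exp (2 * √y) := by rw [← Real.exp_nat_mul]; norm_num

lemma prod_Icc_one_add_div_le {A : ℝ} (hA : 0 ≤ A) {n : ℕ} {m : ℤ}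
    (hm : m ∈ Finset.Icc (-(n : ℤ)) n) :
    ∏ k ∈ Finset.Icc (-(n : ℤ)) n, (1 + A / (|(k : ℝ) - m| + 1)) ≤
      Real.exp (8 * √(A * (2 * n + 1))) := by
  rw [Finset.mem_Icc] at hm
  have hmap : (Finset.Icc (-((2 * n : ℕ) : ℤ)) (2 * n : ℕ)).map (addRightEmbedding m) =
      Finset.Icc (m - 2 * n) (m + 2 * n) := by
    rw [Finset.map_add_right_Icc]
    congr 1 <;> push_cast <;> ring
  calc ∏ k ∈ Finset.Icc (-(n : ℤ)) n, (1 + A / (|(k : ℝ) - m| + 1))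
      ≤ ∏ k ∈ Finset.Icc (m - 2 * n) (m + 2 * n), (1 + A / (|(k : ℝ) - m| + 1)) := by
        refine Finset.prod_le_prod_of_subset_of_one_le (Finset.Icc_subset_Icc ?_ ?_)
          (fun k _ => by positivity) fun k _ _ => ?_
        · omega
        · omega
        · exact le_add_of_nonneg_right (by positivity)
    _ = ∏ k ∈ Finset.Icc (-((2 * n : ℕ) : ℤ)) (2 * n : ℕ), (1 + A / (|(k : ℝ)| + 1)) := by
        rw [← hmap, Finset.prod_map]
        simp only [addRightEmbedding_apply, Int.cast_add, add_sub_cancel_right]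
    _ ≤ ∏ k ∈ Finset.Icc (-((2 * n : ℕ) : ℤ)) (2 * n : ℕ),
          Real.exp (2 * √A * (1 / √(|(k : ℝ)| + 1))) := by
        gcongr with k
        refine (one_add_le_exp_two_mul_sqrt (by positivity)).trans_eq ?_
        rw [Real.sqrt_div hA, mul_one_div, mul_div_assoc]
    _ = Real.exp (2 * √A * ∑ k ∈ Finset.Icc (-((2 * n : ℕ) : ℤ)) (2 * n : ℕ),
          1 / √(|(k : ℝ)| + 1)) := by rw [← Real.exp_sum, Finset.mul_sum]
    _ ≤ Real.exp (2 * √A * (4 * √((2 * n : ℕ) + 1))) := by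
        gcongr
        exact sum_Icc_inv_sqrt_abs_add_one_le (2 * n)
    _ = Real.exp (8 * √(A * (2 * n + 1))) := by
        rw [Real.sqrt_mul hA]
        push_cast
        ring_nf

lemma four_mul_add_pow_mul_factorial_sq_le {n b : ℕ} (hbn : b ≤ n) :
    (4 * (n + b)) ^ (2 * b) * (n + 1).factorial ^ 2 ≤
      8 ^ (2 * b) * (n + 1) ^ 2 * (n + b).factorial ^ 2 := by
  calc (4 * (n + b)) ^ (2 * b) * (n + 1).factorial ^ 2
      ≤ (8 * (n + 1)) ^ (2 * b) * (n + 1).factorial ^ 2 :=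
        Nat.mul_le_mul_right _ (Nat.pow_le_pow_left (by omega) _)
    _ = 8 ^ (2 * b) * (n + 1) ^ 2 * (n.factorial * (n + 1) ^ b) ^ 2 := by
        rw [Nat.factorial_succ, mul_pow 8]
        ring
    _ ≤ 8 ^ (2 * b) * (n + 1) ^ 2 * (n + b).factorial ^ 2 := by
        gcongr
        exact Nat.factorial_mul_pow_le_factorial

end IntegerWindows

section Square

/-- The open square with centre `0` and sides of length `2 * R` parallel to the axes. -/
def openSquare (R : ℝ) : Set ℂ := Set.Ioo (-R) R ×ℂ Set.Ioo (-R) R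

lemma isOpen_openSquare (R : ℝ) : IsOpen (openSquare R) := isOpen_Ioo.reProdIm isOpen_Ioo

lemma isBounded_openSquare (R : ℝ) : Bornology.IsBounded (openSquare R) :=
  (Metric.isBounded_Ioo _ _).reProdIm (Metric.isBounded_Ioo _ _)

lemma ofReal_mem_openSquare {R x : ℝ} (hR : 0 < R) : (x : ℂ) ∈ openSquare R ↔ |x| < R := by
  simp [openSquare, mem_reProdIm, abs_lt, hR]

lemma abs_re_le_of_mem_closure_openSquare {R : ℝ} {z : ℂ} (hz : z ∈ closure (openSquare R)) :
    |z.re| ≤ R := by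
  rw [openSquare, closure_reProdIm] at hz
  exact abs_le.2 (closure_minimal Set.Ioo_subset_Icc_self isClosed_Icc hz.1)

lemma abs_im_le_of_mem_closure_openSquare {R : ℝ} {z : ℂ} (hz : z ∈ closure (openSquare R)) :
    |z.im| ≤ R := by
  rw [openSquare, closure_reProdIm] at hz
  exact abs_le.2 (closure_minimal Set.Ioo_subset_Icc_self isClosed_Icc hz.2)

lemma abs_re_eq_or_abs_im_eq_of_mem_frontier_openSquare {R : ℝ} {z : ℂ}
    (hz : z ∈ frontier (openSquare R)) : |z.re| = R ∨ |z.im| = R := by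
  rw [(isOpen_openSquare R).frontier_eq, openSquare] at hz
  by_contra! h
  have hre := (abs_re_le_of_mem_closure_openSquare hz.1).lt_of_ne h.1
  have him := (abs_im_le_of_mem_closure_openSquare hz.1).lt_of_ne h.2
  exact hz.2 ⟨abs_lt.1 hre, abs_lt.1 him⟩

lemma sub_abs_le_norm_sub_of_mem_frontier_openSquare {R : ℝ} {z : ℂ}
    (hz : z ∈ frontier (openSquare R)) (x : ℝ) : R - |x| ≤ ‖z - x‖ := by
  rcases abs_re_eq_or_abs_im_eq_of_mem_frontier_openSquare hz with h | h
  · calc R - |x| = |z.re| - |x| := by rw [h]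
      _ ≤ |z.re - x| := abs_sub_abs_le_abs_sub _ _
      _ = |(z - x).re| := by simp
      _ ≤ ‖z - x‖ := abs_re_le_norm _
  · calc R - |x| ≤ R := sub_le_self _ (abs_nonneg _)
      _ = |(z - x).im| := by simp [h]
      _ ≤ ‖z - x‖ := abs_im_le_norm _

end Square

section Sine

lemma norm_sin_sq (z : ℂ) : ‖Complex.sin z‖ ^ 2 = Real.sin z.re ^ 2 + Real.sinh z.im ^ 2 := by
  have h : Complex.sin z = ((Real.sin z.re * Real.cosh z.im : ℝ) : ℂ)
      + ((Real.cos z.re * Real.sinh z.im : ℝ) : ℂ) * I := by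
    rw [Complex.sin_eq]
    push_cast
    ring
  rw [← Complex.normSq_eq_norm_sq, h, Complex.normSq_add_mul_I]
  linear_combination Real.sin z.re ^ 2 * Real.cosh_sq z.im +
    Real.sinh z.im ^ 2 * Real.sin_sq_add_cos_sq z.re

lemma exp_abs_im_div_four_le_norm_sin_of_cos_re_eq_zero {z : ℂ} (h : Real.cos z.re = 0) :
    Real.exp |z.im| / 4 ≤ ‖Complex.sin z‖ := by
  have hcosh : ‖Complex.sin z‖ = Real.cosh z.im := by
    rw [← sq_eq_sq₀ (norm_nonneg _) (Real.cosh_pos _).le, norm_sin_sq, Real.sin_sq, h,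
      Real.cosh_sq]
    ring
  rw [hcosh, ← Real.cosh_abs, Real.cosh_eq]
  linarith [Real.exp_pos |z.im|, Real.exp_pos (-|z.im|)]

lemma exp_abs_im_div_four_le_norm_sin_of_one_le_abs_im {z : ℂ} (h : 1 ≤ |z.im|) :
    Real.exp |z.im| / 4 ≤ ‖Complex.sin z‖ := by
  have hsinh : Real.sinh |z.im| ≤ ‖Complex.sin z‖ := by
    refine abs_le_of_sq_le_sq' ?_ (norm_nonneg _) |>.2
    rw [norm_sin_sq, ← Real.abs_sinh, sq_abs]
    exact le_add_of_nonneg_left (sq_nonneg _)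
  refine le_trans ?_ hsinh
  rw [Real.sinh_eq, Real.exp_neg]
  have hexp : 2 ≤ Real.exp |z.im| := by linarith [Real.add_one_le_exp |z.im|]
  have hinv : (Real.exp |z.im|)⁻¹ ≤ 2⁻¹ := by gcongr
  linarith

lemma exp_pi_mul_abs_im_div_four_le_norm_sin {N : ℕ} {z : ℂ}
    (hz : z ∈ frontier (openSquare (N + 1 / 2))) :
    Real.exp (Real.pi * |z.im|) / 4 ≤ ‖Complex.sin (Real.pi * z)‖ := by
  have him : |((Real.pi : ℂ) * z).im| = Real.pi * |z.im| := by
    rw [im_ofReal_mul, abs_mul, abs_of_pos Real.pi_pos]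
  rw [← him]
  rcases abs_re_eq_or_abs_im_eq_of_mem_frontier_openSquare hz with h | h
  · apply exp_abs_im_div_four_le_norm_sin_of_cos_re_eq_zero
    rw [re_ofReal_mul, ← Real.cos_abs, abs_mul, h, abs_of_pos Real.pi_pos, Real.cos_eq_zero_iff]
    exact ⟨N, by push_cast; ring⟩
  · apply exp_abs_im_div_four_le_norm_sin_of_one_le_abs_im
    rw [him, h]
    nlinarith [Real.pi_gt_three, (N.cast_nonneg : (0 : ℝ) ≤ N)]

lemma sin_pi_mul_ne_zero_of_mem_frontier {N : ℕ} {z : ℂ}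
    (hz : z ∈ frontier (openSquare (N + 1 / 2))) : Complex.sin (Real.pi * z) ≠ 0 :=
  norm_pos_iff.1 <| lt_of_lt_of_le (by positivity) (exp_pi_mul_abs_im_div_four_le_norm_sin hz)

/-- Up to sign and the factor `π`, the polynomial `∏ |k| ≤ N, (z - k)` times the cosecant of `π z`:
the cosecant with its poles at the integers of modulus at most `N` removed. The quotient is encoded
by Gamma functions, through the reflection formula, so that it has the correct values at those
integers. -/
noncomputable def regularizedCosec (N : ℕ) (z : ℂ) : ℂ :=
  Gamma (N + 1 + z) * Gamma (N + 1 - z)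

lemma regularizedCosec_zero_right (N : ℕ) : regularizedCosec N 0 = (N.factorial : ℂ) ^ 2 := by
  rw [regularizedCosec, add_zero, sub_zero, Gamma_nat_eq_factorial, sq]

lemma differentiableAt_regularizedCosec {N : ℕ} {z : ℂ} (hz : |z.re| < N + 1) :
    DifferentiableAt ℂ (regularizedCosec N) z := by
  have hGamma : ∀ w : ℂ, 0 < w.re → DifferentiableAt ℂ Gamma w := fun w hw =>
    differentiableAt_Gamma w fun m hm => by
      rw [hm, neg_re, natCast_re] at hw
      linarith [(m.cast_nonneg : (0 : ℝ) ≤ m)]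
  rw [abs_lt] at hz
  refine ((hGamma _ ?_).comp z (by fun_prop)).mul ((hGamma _ ?_).comp z (by fun_prop))
  · simp only [add_re, natCast_re, one_re]
    linarith
  · simp only [add_re, sub_re, natCast_re, one_re]
    linarith

lemma diffContOnCl_regularizedCosec (N : ℕ) :
    DiffContOnCl ℂ (regularizedCosec N) (openSquare (N + 1 / 2)) :=
  DifferentiableOn.diffContOnCl fun _ hz =>
    (differentiableAt_regularizedCosec
      ((abs_re_le_of_mem_closure_openSquare hz).trans_lt (by linarith))).differentiableWithinAt

lemma regularizedCosec_mul_sin {N : ℕ} {z : ℂ} (hz : Complex.sin (Real.pi * z) ≠ 0) :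
    ‖regularizedCosec N z‖ * ‖Complex.sin (Real.pi * z)‖ =
      Real.pi * ∏ k ∈ Finset.Icc (-(N : ℤ)) N, ‖z - k‖ := by
  have hint : ∀ k : ℤ, z ≠ k := by
    rintro k rfl
    exact hz (by rw [mul_comm]; exact Complex.sin_int_mul_pi k)
  induction N with
  | zero =>
    have hz0 : z ≠ 0 := by simpa using hint 0
    have hG : regularizedCosec 0 z = z * (Real.pi / Complex.sin (Real.pi * z)) := by
      rw [← Complex.Gamma_mul_Gamma_one_sub, regularizedCosec, Nat.cast_zero, zero_add,
        add_comm 1 z, Gamma_add_one z hz0, mul_assoc]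
    rw [← norm_mul, hG, mul_assoc, div_mul_cancel₀ _ hz, norm_mul, norm_real,
      Real.norm_of_nonneg Real.pi_pos.le, mul_comm]
    simp
  | succ N ih =>
    have hplus : (N : ℂ) + 1 + z ≠ 0 := fun h =>
      hint (-(N + 1)) (by push_cast; linear_combination h)
    have hminus : (N : ℂ) + 1 - z ≠ 0 := fun h =>
      hint (N + 1) (by push_cast; linear_combination -h)
    have hG : regularizedCosec (N + 1) z =
        (z + (N + 1)) * ((N + 1) - z) * regularizedCosec N z := by
      simp only [regularizedCosec]
      rw [show ((N + 1 : ℕ) : ℂ) + 1 + z = N + 1 + z + 1 by push_cast; ring,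
        show ((N + 1 : ℕ) : ℂ) + 1 - z = N + 1 - z + 1 by push_cast; ring,
        Gamma_add_one _ hplus, Gamma_add_one _ hminus]
      ring
    rw [hG, prod_Icc_neg_succ, norm_mul, norm_mul, mul_assoc, ih, norm_sub_rev ((N : ℂ) + 1)]
    push_cast
    rw [sub_neg_eq_add]
    ring

lemma two_mul_abs_sub_int_le_abs_sin {t : ℝ} {p : ℤ} (ht : |t - p| ≤ 1 / 2) :
    2 * |t - p| ≤ |Real.sin (Real.pi * t)| := by
  have hperiod : |Real.sin (Real.pi * t)| = |Real.sin (Real.pi * (t - p))| := by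
    rw [mul_sub, mul_comm Real.pi (p : ℝ), Real.sin_sub_int_mul_pi, abs_mul, abs_neg_one_zpow,
      one_mul]
  have habs : |Real.pi * (t - p)| = Real.pi * |t - p| := by rw [abs_mul, abs_of_pos Real.pi_pos]
  have hjordan := Real.mul_abs_le_abs_sin (x := Real.pi * (t - p)) (by
    rw [habs]
    nlinarith [Real.pi_pos])
  rwa [habs, ← mul_assoc, div_mul_cancel₀ _ Real.pi_ne_zero, ← hperiod] at hjordan

lemma norm_regularizedCosec_le_of_ne {N : ℕ} {t : ℝ} {p : ℤ} (hp : p ∈ Finset.Icc (-(N : ℤ)) N)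
    (ht : |t - p| ≤ 1 / 2) (hne : t ≠ p) :
    ‖regularizedCosec N t‖ ≤ 2 * ∏ k ∈ Finset.Icc (-(N : ℤ)) N, (|t - k| + 1) := by
  have hpos : 0 < |t - p| := abs_pos.2 (sub_ne_zero.2 hne)
  have hsin := two_mul_abs_sub_int_le_abs_sin ht
  have hnorm : ‖Complex.sin (Real.pi * t)‖ = |Real.sin (Real.pi * t)| := by
    rw [← ofReal_mul, ← ofReal_sin, norm_real, Real.norm_eq_abs]
  have hprod := regularizedCosec_mul_sin (N := N) (z := t) (norm_pos_iff.1 (by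
    rw [hnorm]
    linarith))
  have hfactor : ∏ k ∈ Finset.Icc (-(N : ℤ)) N, ‖(t : ℂ) - k‖ ≤
      |t - p| * ∏ k ∈ Finset.Icc (-(N : ℤ)) N, (|t - k| + 1) := by
    rw [← Finset.mul_prod_erase _ _ hp, ← ofReal_intCast, ← ofReal_sub, norm_real]
    refine mul_le_mul_of_nonneg_left ?_ hpos.le
    calc ∏ k ∈ (Finset.Icc (-(N : ℤ)) N).erase p, ‖(t : ℂ) - k‖
        ≤ ∏ k ∈ (Finset.Icc (-(N : ℤ)) N).erase p, (|t - k| + 1) := by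
          gcongr with k
          rw [← ofReal_intCast, ← ofReal_sub, norm_real]
          exact le_add_of_nonneg_right zero_le_one
      _ ≤ _ := Finset.prod_le_prod_of_subset_of_one_le (Finset.erase_subset _ _)
          (fun k _ => by positivity) fun k _ _ => le_add_of_nonneg_left (abs_nonneg _)
  rw [hnorm] at hprod
  refine le_of_mul_le_mul_right ?_ (mul_pos two_pos hpos)
  calc ‖regularizedCosec N t‖ * (2 * |t - p|)
      ≤ ‖regularizedCosec N t‖ * |Real.sin (Real.pi * t)| := by gcongr
    _ ≤ Real.pi * (|t - p| * ∏ k ∈ Finset.Icc (-(N : ℤ)) N, (|t - k| + 1)) := by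
      rw [hprod]
      gcongr
    _ ≤ 4 * (|t - p| * ∏ k ∈ Finset.Icc (-(N : ℤ)) N, (|t - k| + 1)) := by
      gcongr
      exact Real.pi_le_four
    _ = _ := by ring

lemma norm_regularizedCosec_le {N : ℕ} {t : ℝ} (ht : |t| ≤ N) :
    ‖regularizedCosec N t‖ ≤ 2 * ∏ k ∈ Finset.Icc (-(N : ℤ)) N, (|t - k| + 1) := by
  have hround : round t ∈ Finset.Icc (-(N : ℤ)) N := by
    have hlt : |(round t : ℝ)| < N + 1 := by
      linarith [abs_sub_round t, abs_sub_abs_le_abs_sub (round t : ℝ) t, abs_sub_comm t (round t)]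
    rw [Finset.mem_Icc, ← abs_le, ← Int.lt_add_one_iff]
    exact_mod_cast hlt
  by_cases hne : t = round t
  · have hcont : ContinuousAt (fun s : ℝ => ‖regularizedCosec N s‖) t :=
      ((differentiableAt_regularizedCosec (by
        rw [ofReal_re]
        linarith)).continuousAt.comp continuous_ofReal.continuousAt).norm
    have hcont' : ContinuousAt
        (fun s : ℝ => 2 * ∏ k ∈ Finset.Icc (-(N : ℤ)) N, (|s - k| + 1)) t := by fun_prop
    refine le_of_tendsto_of_tendsto (hcont.tendsto.mono_left nhdsWithin_le_nhds)
      (hcont'.tendsto.mono_left nhdsWithin_le_nhds) (b := nhdsWithin t {t}ᶜ) ?_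
    filter_upwards [self_mem_nhdsWithin, nhdsWithin_le_nhds
      (Metric.closedBall_mem_nhds t one_half_pos)] with s hst hs
    rw [Metric.mem_closedBall, Real.dist_eq, hne] at hs
    rw [hne] at hst
    exact norm_regularizedCosec_le_of_ne hround hs hst
  · exact norm_regularizedCosec_le_of_ne hround (abs_sub_round t) hne

end Sine

section Interpolation

variable {ι : Type*} {s : Finset ι} {v : ι → ℂ} {U : Set ℂ}

lemma diffContOnCl_dslope {E : Type*} [NormedAddCommGroup E] [NormedSpace ℂ E] [CompleteSpace E]
    {F : ℂ → E} (hF : DiffContOnCl ℂ F U) {c : ℂ} (hc : U ∈ nhds c) :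
    DiffContOnCl ℂ (dslope F c) U :=
  ⟨(Complex.differentiableOn_dslope hc).2 hF.differentiableOn,
    (continuousOn_dslope (mem_of_superset hc subset_closure)).2
      ⟨hF.continuousOn, hF.differentiableOn.differentiableAt hc⟩⟩

lemma norm_le_mul_prod_of_forall_mem_frontier {E : Type*} [NormedAddCommGroup E] [NormedSpace ℂ E]
    [CompleteSpace E] (hU : IsOpen U) (hUb : Bornology.IsBounded U) (hv : Set.InjOn v s)
    (hvU : ∀ i ∈ s, v i ∈ U) {F : ℂ → E} (hF : DiffContOnCl ℂ F U) (hzero : ∀ i ∈ s, F (v i) = 0)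
    {K : ℝ} (hK : ∀ z ∈ frontier U, ‖F z‖ ≤ K * ∏ i ∈ s, ‖z - v i‖) {w : ℂ} (hw : w ∈ U) :
    ‖F w‖ ≤ K * ∏ i ∈ s, ‖w - v i‖ := by
  induction s using Finset.cons_induction generalizing F with
  | empty =>
    simp only [Finset.prod_empty, mul_one] at hK ⊢
    exact norm_le_of_forall_mem_frontier_norm_le hUb hF hK (subset_closure hw)
  | cons j s hj ih =>
    simp only [Finset.coe_cons, Finset.forall_mem_cons, Finset.prod_cons] at hv hvU hzero hK ⊢
    have hdiv : ∀ z, ‖F z‖ = ‖z - v j‖ * ‖dslope F (v j) z‖ := fun z => by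
      rw [← norm_smul, sub_smul_dslope, hzero.1, sub_zero]
    have hdslope := ih (hv.mono (Set.subset_insert _ _)) hvU.2
      (diffContOnCl_dslope hF (hU.mem_nhds hvU.1)) (fun i hi => ?_) fun z hz => ?_
    · rw [hdiv, mul_left_comm]
      gcongr
    · have hne : v i ≠ v j := fun h =>
        hj (hv (Set.mem_insert_of_mem _ hi) (Set.mem_insert _ _) h ▸ hi)
      rw [dslope_of_ne _ hne, slope, hzero.1, hzero.2 i hi, vsub_self, smul_zero]
    · have hpos : 0 < ‖z - v j‖ := norm_pos_iff.2 (sub_ne_zero.2 fun h =>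
        (hU.frontier_eq ▸ hz).2 (h ▸ hvU.1))
      have hFz := hK z hz
      rw [hdiv, mul_left_comm] at hFz
      exact le_of_mul_le_mul_left hFz hpos

variable [DecidableEq ι]

lemma eval_basis_eq_nodalWeight_mul (i : ι) (z : ℂ) :
    (Lagrange.basis s v i).eval z =
      Lagrange.nodalWeight s v i * ∏ j ∈ s.erase i, (z - v j) := by
  simp only [Lagrange.basis, Lagrange.basisDivisor, Lagrange.nodalWeight, Polynomial.eval_prod,
    Polynomial.eval_mul, Polynomial.eval_C, Polynomial.eval_sub, Polynomial.eval_X,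
    Finset.prod_mul_distrib]

lemma norm_eval_interpolate_le {r : ι → ℂ} {y : ℝ}
    (hr : ∀ i ∈ s, ‖r i‖ * ‖Lagrange.nodalWeight s v i‖ ≤ y) (z : ℂ) :
    ‖(Lagrange.interpolate s v r).eval z‖ ≤ y * ∑ i ∈ s, ∏ j ∈ s.erase i, ‖z - v j‖ := by
  rw [Lagrange.interpolate_apply, Polynomial.eval_finsetSum, Finset.mul_sum]
  refine norm_sum_le_of_le _ fun i hi => ?_
  rw [Polynomial.eval_mul, Polynomial.eval_C, eval_basis_eq_nodalWeight_mul, norm_mul, norm_mul,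
    norm_prod, ← mul_assoc]
  gcongr
  exact hr i hi

lemma norm_le_of_forall_mem_frontier_of_nodes (hU : IsOpen U) (hUb : Bornology.IsBounded U)
    (hv : Set.InjOn v s) (hvU : ∀ i ∈ s, v i ∈ U)
    {d : ℝ} (hd : 0 < d) (hvd : ∀ z ∈ frontier U, ∀ i ∈ s, d ≤ ‖z - v i‖)
    {g : ℂ → ℂ} (hg : DiffContOnCl ℂ g U) {Y y : ℝ}
    (hY : ∀ z ∈ frontier U, ‖g z‖ ≤ Y * ∏ i ∈ s, ‖z - v i‖)
    (hy : ∀ i ∈ s, ‖g (v i)‖ * ‖Lagrange.nodalWeight s v i‖ ≤ y) {w : ℂ} (hw : w ∈ U) :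
    ‖g w‖ ≤ (Y + s.card * (y / d)) * ∏ i ∈ s, ‖w - v i‖ +
      y * ∑ i ∈ s, ∏ j ∈ s.erase i, ‖w - v j‖ := by
  set p := Lagrange.interpolate s v fun i => g (v i) with hp
  have hinterp : ∀ z, ‖p.eval z‖ ≤ y * ∑ i ∈ s, ∏ j ∈ s.erase i, ‖z - v j‖ :=
    norm_eval_interpolate_le hy
  have hfrontier : ∀ z ∈ frontier U,
      ‖g z - p.eval z‖ ≤ (Y + s.card * (y / d)) * ∏ i ∈ s, ‖z - v i‖ := fun z hz => by
    have herase : ∀ i ∈ s, y * ∏ j ∈ s.erase i, ‖z - v j‖ ≤ y / d * ∏ j ∈ s, ‖z - v j‖ := by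
      intro i hi
      have hy0 : 0 ≤ y := (mul_nonneg (norm_nonneg _) (norm_nonneg _)).trans (hy i hi)
      rw [← Finset.mul_prod_erase _ _ hi, ← mul_assoc]
      gcongr
      rw [div_mul_eq_mul_div, le_div_iff₀ hd]
      gcongr
      exact hvd z hz i hi
    calc ‖g z - p.eval z‖ ≤ ‖g z‖ + ‖p.eval z‖ := norm_sub_le _ _
      _ ≤ Y * ∏ i ∈ s, ‖z - v i‖ + ∑ _i ∈ s, y / d * ∏ j ∈ s, ‖z - v j‖ := by
        refine add_le_add (hY z hz) ((hinterp z).trans ?_)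
        rw [Finset.mul_sum]
        exact Finset.sum_le_sum herase
      _ = _ := by rw [Finset.sum_const, nsmul_eq_mul]; ring
  have hremainder := norm_le_mul_prod_of_forall_mem_frontier hU hUb hv hvU
    (hg.sub p.differentiable.diffContOnCl)
    (fun _ hi => by
      rw [Pi.sub_apply, sub_eq_zero, hp, Lagrange.eval_interpolate_at_node _ hv hi])
    hfrontier hw
  calc ‖g w‖ ≤ ‖g w - p.eval w‖ + ‖p.eval w‖ := norm_le_norm_sub_add _ _
    _ ≤ _ := add_le_add hremainder (hinterp w)

end Interpolation

section PerturbedWindow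

lemma prod_Icc_neg_add_le {f : ℤ → ℝ} {c : ℝ} {n b : ℕ}
    (hf : ∀ k ∈ Finset.Icc (-((n + b : ℕ) : ℤ)) (n + b : ℕ), 0 ≤ f k)
    (hc : ∀ k ∈ Finset.Icc (-((n + b : ℕ) : ℤ)) (n + b : ℕ), f k ≤ c) :
    ∏ k ∈ Finset.Icc (-((n + b : ℕ) : ℤ)) (n + b : ℕ), f k ≤
      c ^ (2 * b) * ∏ k ∈ Finset.Icc (-(n : ℤ)) n, f k := by
  have hsub : Finset.Icc (-(n : ℤ)) n ⊆ Finset.Icc (-((n + b : ℕ) : ℤ)) (n + b : ℕ) :=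
    Finset.Icc_subset_Icc (by omega) (by omega)
  have hcard : (Finset.Icc (-((n + b : ℕ) : ℤ)) (n + b : ℕ) \ Finset.Icc (-(n : ℤ)) n).card =
      2 * b := by
    rw [Finset.card_sdiff_of_subset hsub, Int.card_Icc, Int.card_Icc]
    omega
  rw [← Finset.prod_sdiff hsub, ← hcard, ← Finset.prod_const]
  refine mul_le_mul_of_nonneg_right (Finset.prod_le_prod ?_ ?_)
    (Finset.prod_nonneg fun k hk => hf k (hsub hk))
  · exact fun k hk => hf k (Finset.sdiff_subset hk)
  · exact fun k hk => hc k (Finset.sdiff_subset hk)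

lemma abs_intCast_le_of_mem_Icc {n : ℕ} {k : ℤ} (hk : k ∈ Finset.Icc (-(n : ℤ)) n) :
    |(k : ℝ)| ≤ n := by
  rw [Finset.mem_Icc, ← abs_le] at hk
  exact_mod_cast hk

lemma sampling_scale_le {n b : ℕ} {N T t : ℝ} (hT : 0 ≤ T) (hbt : b ≤ 2 * t)
    (hTt : T * N ≤ t ^ 2) (hnN : n + 1 ≤ N) :
    8 ^ (2 * b) * (n + 1) ^ 2 * Real.exp (8 * √(T * (2 * n + 1))) ≤
      N ^ 2 * Real.exp (28 * t) := by
  have ht : 0 ≤ t := by linarith [b.cast_nonneg (α := ℝ)]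
  have hpow : (8 : ℝ) ^ (2 * b) ≤ Real.exp (12 * t) := by
    refine (eight_pow_le_exp _).trans (Real.exp_le_exp.2 ?_)
    push_cast
    linarith
  have hsqrt : √(T * (2 * n + 1)) ≤ 2 * t := by
    rw [Real.sqrt_le_left (by positivity)]
    nlinarith
  calc _ ≤ Real.exp (12 * t) * N ^ 2 * Real.exp (8 * (2 * t)) := by gcongr
    _ = N ^ 2 * (Real.exp (12 * t) * Real.exp (8 * (2 * t))) := by ring
    _ = N ^ 2 * Real.exp (28 * t) := by rw [← Real.exp_add]; ring_nf

lemma sampling_frontier_factor_le {n b : ℕ} {N T t : ℝ} (hT : 0 ≤ T) (htb : t ≤ b) (ht : 0 ≤ t)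
    (hTt : T * N ≤ t ^ 2) (hnN : n + 1 ≤ N) :
    Real.pi * (1 + 2 * T / b) ^ (2 * n + 1) ≤ 16 * N ^ 2 * Real.exp (4 * t) := by
  gcongr
  · nlinarith [Real.pi_le_four, n.cast_nonneg (α := ℝ)]
  · refine one_add_div_pow_le_exp (by positivity) b.cast_nonneg (by positivity) ?_
    push_cast
    nlinarith

lemma sampling_node_factor_le {n : ℕ} {N T t δ : ℝ} (hT : 0 ≤ T) (hTN : T ≤ N) (ht : 0 ≤ t)
    (hTt : T * N ≤ t ^ 2) (hnN : n + 1 ≤ N) (hδ : 0 < δ) :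
    8 * T * (2 * n + 1) * Real.exp (8 * √(4 * T / δ * (2 * n + 1))) ≤
      16 * N ^ 2 * Real.exp (8 * √(8 / δ) * t) := by
  have hsqrt : √(4 * T / δ * (2 * n + 1)) ≤ √(8 / δ) * t := by
    refine sqrt_le_sqrt_mul_of_le_mul_sq (by positivity) ht ?_
    rw [div_mul_eq_mul_div, div_mul_eq_mul_div]
    exact div_le_div_of_nonneg_right (by nlinarith) hδ.le
  rw [mul_assoc 8 (√(8 / δ))]
  gcongr ?_ * Real.exp (8 * ?_)
  nlinarith

lemma sampling_bound_le {n b : ℕ} {N T t δ Y y : ℝ} (hT : 0 ≤ T) (hTN : T ≤ N) (htb : t ≤ b)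
    (hbt : b ≤ 2 * t) (hTt : T * N ≤ t ^ 2) (hnN : n + 1 ≤ N) (hδ : 0 < δ) (hY : 0 ≤ Y)
    (hy : 0 ≤ y) :
    8 ^ (2 * b) * (n + 1) ^ 2 * Real.exp (8 * √(T * (2 * n + 1))) *
      (Real.pi * (1 + 2 * T / b) ^ (2 * n + 1) * Y +
        8 * T * (2 * n + 1) * Real.exp (8 * √(4 * T / δ * (2 * n + 1))) * y) ≤
      16 * N ^ 4 * Real.exp ((32 + 8 * √(8 / δ)) * t) * (Y + y) := by
  have ht : 0 ≤ t := by linarith [b.cast_nonneg (α := ℝ)]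
  calc _ ≤ N ^ 2 * Real.exp (28 * t) * (16 * N ^ 2 * Real.exp (4 * t + 8 * √(8 / δ) * t) * Y +
        16 * N ^ 2 * Real.exp (4 * t + 8 * √(8 / δ) * t) * y) := by
        gcongr ?_ * (?_ * Y + ?_ * y)
        · exact sampling_scale_le hT hbt hTt hnN
        · refine (sampling_frontier_factor_le hT htb ht hTt hnN).trans ?_
          gcongr
          exact le_add_of_nonneg_right (by positivity)
        · refine (sampling_node_factor_le hT hTN ht hTt hnN hδ).trans ?_
          gcongr
          exact le_add_of_nonneg_left (by positivity)
    _ = 16 * N ^ 4 * (Real.exp (28 * t) * Real.exp (4 * t + 8 * √(8 / δ) * t)) * (Y + y) := by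
        ring
    _ = _ := by rw [← Real.exp_add]; ring_nf

/-- The reals `x k`, for integers `|k| ≤ n`, are nodes that interpolation can use in place of the
integers: `x k` is within `T` of `k`, and the nodes are separated with constant `δ`. The values of
`x` at other integers are irrelevant. -/
structure IsPerturbedWindow (n : ℕ) (T δ : ℝ) (x : ℤ → ℝ) : Prop where
  abs_sub_int_le : ∀ k ∈ Finset.Icc (-(n : ℤ)) n, |x k - k| ≤ T
  le_abs_sub : ∀ j ∈ Finset.Icc (-(n : ℤ)) n, ∀ k ∈ Finset.Icc (-(n : ℤ)) n,
    δ * |(j : ℝ) - k| ≤ |x j - x k|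

namespace IsPerturbedWindow

variable {n b : ℕ} {T δ : ℝ} {x : ℤ → ℝ}

lemma injOn (hx : IsPerturbedWindow n T δ x) (hδ : 0 < δ) :
    Set.InjOn x (Finset.Icc (-(n : ℤ)) n) := by
  intro j hj k hk hjk
  have h := hx.le_abs_sub j hj k hk
  rw [hjk, sub_self, abs_zero] at h
  have hjk0 : |(j : ℝ) - k| ≤ 0 := by
    by_contra! hpos
    exact (mul_pos hδ hpos).not_ge h
  exact_mod_cast sub_eq_zero.1 (abs_nonpos_iff.1 hjk0)

lemma abs_node_le (hx : IsPerturbedWindow n T δ x) {k : ℤ} (hk : k ∈ Finset.Icc (-(n : ℤ)) n) :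
    |x k| ≤ |(k : ℝ)| + T := by
  linarith [hx.abs_sub_int_le k hk, abs_sub_abs_le_abs_sub (x k) k]

lemma prod_abs_le (hx : IsPerturbedWindow n T δ x) (hT : 0 ≤ T) {s : Finset ℤ}
    (hs : s ⊆ Finset.Icc (-(n : ℤ)) n) :
    ∏ k ∈ s, |x k| ≤ ((n + 1).factorial : ℝ) ^ 2 * Real.exp (8 * √(T * (2 * n + 1))) := by
  calc ∏ k ∈ s, |x k| ≤ ∏ k ∈ s, ((|(k : ℝ)| + 1) * (1 + T / (|(k : ℝ)| + 1))) := by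
        gcongr with k hk
        have hsum : (|(k : ℝ)| + 1) * (1 + T / (|(k : ℝ)| + 1)) = |(k : ℝ)| + 1 + T := by
          field_simp
        linarith [hx.abs_node_le (hs hk)]
    _ ≤ ∏ k ∈ Finset.Icc (-(n : ℤ)) n, ((|(k : ℝ)| + 1) * (1 + T / (|(k : ℝ)| + 1))) := by
        refine Finset.prod_le_prod_of_subset_of_one_le hs (fun k _ => by positivity) fun k _ _ => ?_
        exact one_le_mul_of_one_le_of_one_le (le_add_of_nonneg_left (abs_nonneg _))
          (le_add_of_nonneg_right (by positivity))
    _ ≤ _ := by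
        rw [Finset.prod_mul_distrib, prod_Icc_abs_add_one]
        gcongr
        simpa only [Int.cast_zero, sub_zero] using
          prod_Icc_one_add_div_le hT (m := 0) (Finset.mem_Icc.2 ⟨by omega, by omega⟩)

lemma sub_le_norm_sub_of_mem_frontier (hx : IsPerturbedWindow n T δ x) {z : ℂ}
    (hz : z ∈ frontier (openSquare ((n + b : ℕ) + 1 / 2))) {k : ℤ}
    (hk : k ∈ Finset.Icc (-(n : ℤ)) n) : b - T ≤ ‖z - x k‖ := by
  have h := sub_abs_le_norm_sub_of_mem_frontier_openSquare hz (x k)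
  have hk' := abs_intCast_le_of_mem_Icc hk
  push_cast at h
  linarith [hx.abs_node_le hk]

lemma norm_sub_le_of_mem_frontier (hx : IsPerturbedWindow n T δ x) (hT : 0 < T)
    (hb : 2 * T ≤ b) {z : ℂ} (hz : z ∈ frontier (openSquare ((n + b : ℕ) + 1 / 2))) {k : ℤ}
    (hk : k ∈ Finset.Icc (-(n : ℤ)) n) : ‖z - k‖ ≤ (1 + 2 * T / b) * ‖z - x k‖ := by
  have hb0 : (0 : ℝ) < b := by linarith
  have hfar := hx.sub_le_norm_sub_of_mem_frontier hz hk
  have htri : ‖z - k‖ ≤ ‖z - x k‖ + T := by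
    refine (norm_sub_le_norm_sub_add_norm_sub z (x k) k).trans ?_
    gcongr
    rw [← ofReal_intCast, ← ofReal_sub, norm_real]
    exact hx.abs_sub_int_le k hk
  have hTle : T ≤ 2 * T / b * ‖z - x k‖ := by
    rw [div_mul_eq_mul_div, le_div_iff₀ hb0]
    nlinarith
  linarith

lemma prod_norm_sub_int_le (hx : IsPerturbedWindow n T δ x) (hT : 0 < T) (hb : 2 * T ≤ b) {z : ℂ}
    (hz : z ∈ frontier (openSquare ((n + b : ℕ) + 1 / 2))) :
    ∏ k ∈ Finset.Icc (-((n + b : ℕ) : ℤ)) (n + b : ℕ), ‖z - k‖ ≤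
      (4 * (n + b : ℕ)) ^ (2 * b) * (1 + 2 * T / b) ^ (2 * n + 1) *
        ∏ k ∈ Finset.Icc (-(n : ℤ)) n, ‖z - x k‖ := by
  have hN : (1 : ℝ) ≤ (n + b : ℕ) := by
    have : 0 < b := by exact_mod_cast (by linarith : (0 : ℝ) < b)
    exact_mod_cast (by omega : 1 ≤ n + b)
  have hcard : (Finset.Icc (-(n : ℤ)) n).card = 2 * n + 1 := by
    rw [Int.card_Icc]
    omega
  rw [mul_assoc]
  refine (prod_Icc_neg_add_le (fun k _ => norm_nonneg _) fun k hk => ?_).trans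
    (mul_le_mul_of_nonneg_left ?_ (by positivity))
  · have hcl := frontier_subset_closure hz
    calc ‖z - k‖ ≤ ‖z‖ + ‖(k : ℂ)‖ := norm_sub_le _ _
      _ ≤ |z.re| + |z.im| + |(k : ℝ)| := by
        rw [norm_intCast]
        gcongr
        exact norm_le_abs_re_add_abs_im z
      _ ≤ 4 * (n + b : ℕ) := by
        linarith [abs_re_le_of_mem_closure_openSquare hcl,
          abs_im_le_of_mem_closure_openSquare hcl, abs_intCast_le_of_mem_Icc hk]
  · rw [← hcard, ← Finset.prod_const, ← Finset.prod_mul_distrib]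
    exact Finset.prod_le_prod (fun k _ => norm_nonneg _) fun k hk =>
      hx.norm_sub_le_of_mem_frontier hT hb hz hk

lemma abs_sub_add_one_le (hx : IsPerturbedWindow n T δ x) (hT : 1 ≤ T) (hδ : 0 < δ) {m k : ℤ}
    (hm : m ∈ Finset.Icc (-(n : ℤ)) n) (hk : k ∈ Finset.Icc (-(n : ℤ)) n) (hkm : k ≠ m) :
    |x m - k| + 1 ≤ (1 + 4 * T / δ / (|(k : ℝ) - m| + 1)) * |x m - x k| := by
  have hone : 1 ≤ |(k : ℝ) - m| := by exact_mod_cast Int.one_le_abs (sub_ne_zero.2 hkm)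
  have hsep := hx.le_abs_sub m hm k hk
  rw [abs_sub_comm (m : ℝ)] at hsep
  have htri : |x m - k| ≤ |x m - x k| + T :=
    (abs_sub_le _ (x k) _).trans (by linarith [hx.abs_sub_int_le k hk])
  have hTle : 2 * T ≤ 4 * T / δ / (|(k : ℝ) - m| + 1) * |x m - x k| := by
    rw [div_div, div_mul_eq_mul_div, le_div_iff₀ (by positivity)]
    calc 2 * T * (δ * (|(k : ℝ) - m| + 1)) ≤ 2 * T * (δ * (|(k : ℝ) - m| + |(k : ℝ) - m|)) := by
          gcongr
      _ = 4 * T * (δ * |(k : ℝ) - m|) := by ring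
      _ ≤ 4 * T * |x m - x k| := by gcongr
  linarith

lemma prod_abs_sub_add_one_le (hx : IsPerturbedWindow n T δ x) (hT : 1 ≤ T) (hδ : 0 < δ) {m : ℤ}
    (hm : m ∈ Finset.Icc (-(n : ℤ)) n) :
    ∏ k ∈ Finset.Icc (-(n : ℤ)) n, (|x m - k| + 1) ≤
      2 * T * Real.exp (8 * √(4 * T / δ * (2 * n + 1))) *
        ∏ k ∈ (Finset.Icc (-(n : ℤ)) n).erase m, |x m - x k| := by
  have herase : ∏ k ∈ (Finset.Icc (-(n : ℤ)) n).erase m, (1 + 4 * T / δ / (|(k : ℝ) - m| + 1)) ≤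
      Real.exp (8 * √(4 * T / δ * (2 * n + 1))) :=
    (Finset.prod_le_prod_of_subset_of_one_le (Finset.erase_subset _ _)
      (fun k _ => by positivity) fun k _ _ => le_add_of_nonneg_right (by positivity)).trans
      (prod_Icc_one_add_div_le (by positivity) hm)
  rw [← Finset.mul_prod_erase _ _ hm, mul_assoc]
  gcongr
  · linarith [hx.abs_sub_int_le m hm]
  · refine le_trans ?_ (mul_le_mul_of_nonneg_right herase
      (Finset.prod_nonneg fun k _ => abs_nonneg _))
    rw [← Finset.prod_mul_distrib]
    refine Finset.prod_le_prod (fun k _ => by positivity) fun k hk => ?_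
    exact hx.abs_sub_add_one_le hT hδ hm (Finset.mem_of_mem_erase hk) (Finset.ne_of_mem_erase hk)

lemma norm_regularizedCosec_mul_nodalWeight_le (hx : IsPerturbedWindow n T δ x) (hT : 1 ≤ T)
    (hb : 2 * T ≤ b) (hδ : 0 < δ) {m : ℤ} (hm : m ∈ Finset.Icc (-(n : ℤ)) n) :
    ‖regularizedCosec (n + b) (x m)‖ *
        ‖Lagrange.nodalWeight (Finset.Icc (-(n : ℤ)) n) (fun k => (x k : ℂ)) m‖ ≤
      (4 * (n + b : ℕ)) ^ (2 * b) * (4 * T * Real.exp (8 * √(4 * T / δ * (2 * n + 1)))) := by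
  have hxm : |x m| ≤ (n + b : ℕ) - 1 := by
    push_cast
    linarith [hx.abs_node_le hm, abs_intCast_le_of_mem_Icc hm]
  have hnodes : 0 < ∏ k ∈ (Finset.Icc (-(n : ℤ)) n).erase m, |x m - x k| :=
    Finset.prod_pos fun k hk => abs_pos.2 <| sub_ne_zero.2 fun h =>
      Finset.ne_of_mem_erase hk (hx.injOn hδ (Finset.mem_of_mem_erase hk) hm h.symm)
  have hwindow : ∏ k ∈ Finset.Icc (-((n + b : ℕ) : ℤ)) (n + b : ℕ), (|x m - k| + 1) ≤
      (4 * (n + b : ℕ)) ^ (2 * b) * ∏ k ∈ Finset.Icc (-(n : ℤ)) n, (|x m - k| + 1) :=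
    prod_Icc_neg_add_le (fun k _ => by positivity) fun k hk => by
      linarith [abs_intCast_le_of_mem_Icc hk, abs_sub (x m) k, abs_nonneg (x m)]
  have hweight : ‖Lagrange.nodalWeight (Finset.Icc (-(n : ℤ)) n) (fun k => (x k : ℂ)) m‖ =
      (∏ k ∈ (Finset.Icc (-(n : ℤ)) n).erase m, |x m - x k|)⁻¹ := by
    simp only [Lagrange.nodalWeight, ← ofReal_sub, norm_prod, norm_inv, norm_real,
      Real.norm_eq_abs, Finset.prod_inv_distrib]
  rw [hweight, ← div_eq_mul_inv, div_le_iff₀ hnodes]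
  calc ‖regularizedCosec (n + b) (x m)‖
      ≤ 2 * ∏ k ∈ Finset.Icc (-((n + b : ℕ) : ℤ)) (n + b : ℕ), (|x m - k| + 1) :=
        norm_regularizedCosec_le (by linarith)
    _ ≤ 2 * ((4 * (n + b : ℕ)) ^ (2 * b) *
          (2 * T * Real.exp (8 * √(4 * T / δ * (2 * n + 1))) *
            ∏ k ∈ (Finset.Icc (-(n : ℤ)) n).erase m, |x m - x k|)) := by
        gcongr
        refine hwindow.trans ?_
        gcongr
        exact hx.prod_abs_sub_add_one_le hT hδ hm
    _ = _ := by ring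

variable {Y y : ℝ} {h : ℂ → ℂ}

lemma node_mem_openSquare (hx : IsPerturbedWindow n T δ x) (hb : 2 * T ≤ b)
    {k : ℤ} (hk : k ∈ Finset.Icc (-(n : ℤ)) n) :
    (x k : ℂ) ∈ openSquare ((n + b : ℕ) + 1 / 2) := by
  rw [ofReal_mem_openSquare (by positivity)]
  push_cast
  linarith [hx.abs_node_le hk, abs_intCast_le_of_mem_Icc hk, (b.cast_nonneg : (0 : ℝ) ≤ b)]

lemma norm_regularizedCosec_mul_le_of_mem_frontier (hx : IsPerturbedWindow n T δ x) (hT : 0 < T)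
    (hb : 2 * T ≤ b) (hY0 : 0 ≤ Y) {z : ℂ}
    (hz : z ∈ frontier (openSquare ((n + b : ℕ) + 1 / 2)))
    (hY : ‖h z‖ ≤ Y * ‖Complex.sin (Real.pi * z)‖) :
    ‖regularizedCosec (n + b) z * h z‖ ≤
      (4 * (n + b : ℕ)) ^ (2 * b) * (Real.pi * (1 + 2 * T / b) ^ (2 * n + 1) * Y) *
        ∏ k ∈ Finset.Icc (-(n : ℤ)) n, ‖z - x k‖ := by
  calc ‖regularizedCosec (n + b) z * h z‖
      ≤ ‖regularizedCosec (n + b) z‖ * (Y * ‖Complex.sin (Real.pi * z)‖) := by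
        rw [norm_mul]
        gcongr
    _ = Real.pi * Y * ∏ k ∈ Finset.Icc (-((n + b : ℕ) : ℤ)) (n + b : ℕ), ‖z - k‖ := by
        rw [mul_left_comm, regularizedCosec_mul_sin (sin_pi_mul_ne_zero_of_mem_frontier hz)]
        ring
    _ ≤ Real.pi * Y * ((4 * (n + b : ℕ)) ^ (2 * b) * (1 + 2 * T / b) ^ (2 * n + 1) *
          ∏ k ∈ Finset.Icc (-(n : ℤ)) n, ‖z - x k‖) := by
        gcongr
        exact hx.prod_norm_sub_int_le hT hb hz
    _ = _ := by ring

lemma norm_zero_mul_factorial_sq_le (hx : IsPerturbedWindow n T δ x) (hT : 1 ≤ T) (hb : 2 * T ≤ b)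
    (hδ : 0 < δ) (hh : DiffContOnCl ℂ h (openSquare ((n + b : ℕ) + 1 / 2))) (hY0 : 0 ≤ Y)
    (hY : ∀ z ∈ frontier (openSquare ((n + b : ℕ) + 1 / 2)),
      ‖h z‖ ≤ Y * ‖Complex.sin (Real.pi * z)‖)
    (hy : ∀ k ∈ Finset.Icc (-(n : ℤ)) n, ‖h (x k)‖ ≤ y) :
    ‖h 0‖ * ((n + b).factorial : ℝ) ^ 2 ≤
      (4 * (n + b : ℕ)) ^ (2 * b) * (Real.pi * (1 + 2 * T / b) ^ (2 * n + 1) * Y +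
        8 * T * (2 * n + 1) * Real.exp (8 * √(4 * T / δ * (2 * n + 1))) * y) *
        (((n + 1).factorial : ℝ) ^ 2 * Real.exp (8 * √(T * (2 * n + 1)))) := by
  set W := Finset.Icc (-(n : ℤ)) n
  have hcard : (W.card : ℝ) = 2 * n + 1 := by
    rw [Int.card_Icc, show ((n : ℤ) + 1 - -n).toNat = 2 * n + 1 by omega]
    push_cast
    ring
  have hy0 : 0 ≤ y := (norm_nonneg _).trans (hy 0 (Finset.mem_Icc.2 ⟨by omega, by omega⟩))
  have hprod : ∀ s ⊆ W, ∏ k ∈ s, ‖(0 : ℂ) - x k‖ ≤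
      ((n + 1).factorial : ℝ) ^ 2 * Real.exp (8 * √(T * (2 * n + 1))) := fun s hs => by
    simpa only [zero_sub, norm_neg, norm_real, Real.norm_eq_abs] using
      hx.prod_abs_le (zero_le_one.trans hT) hs
  have hbound := norm_le_of_forall_mem_frontier_of_nodes (isOpen_openSquare _)
    (isBounded_openSquare _) (fun j hj k hk hjk => hx.injOn hδ hj hk (ofReal_injective hjk))
    (fun k hk => hx.node_mem_openSquare hb hk) zero_lt_one
    (fun z hz k hk => le_trans (by linarith) (hx.sub_le_norm_sub_of_mem_frontier hz hk))
    ((diffContOnCl_regularizedCosec (n + b)).smul hh)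
    (fun z hz => hx.norm_regularizedCosec_mul_le_of_mem_frontier (by linarith) hb hY0 hz (hY z hz))
    (y := (4 * (n + b : ℕ)) ^ (2 * b) *
      (4 * T * Real.exp (8 * √(4 * T / δ * (2 * n + 1)))) * y)
    (fun k hk => by
      rw [norm_smul, mul_right_comm]
      exact mul_le_mul (hx.norm_regularizedCosec_mul_nodalWeight_le hT hb hδ hk) (hy k hk)
        (norm_nonneg _) (by positivity))
    ((ofReal_mem_openSquare (x := 0) (by positivity)).2 (by rw [abs_zero]; positivity))
  rw [ofReal_zero, norm_smul, regularizedCosec_zero_right, norm_pow, norm_natCast, mul_comm,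
    hcard, div_one] at hbound
  refine hbound.trans ((add_le_add (mul_le_mul_of_nonneg_left (hprod W subset_rfl) (by positivity))
    (mul_le_mul_of_nonneg_left (Finset.sum_le_card_nsmul _ _ _ fun k _ =>
      hprod _ (Finset.erase_subset k W)) (by positivity))).trans_eq ?_)
  rw [nsmul_eq_mul, hcard]
  ring

lemma norm_zero_le (hx : IsPerturbedWindow n T δ x) (hT : 1 ≤ T) (hb : 2 * T ≤ b) (hbn : b ≤ n)
    (hδ : 0 < δ) (hh : DiffContOnCl ℂ h (openSquare ((n + b : ℕ) + 1 / 2))) (hY0 : 0 ≤ Y)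
    (hY : ∀ z ∈ frontier (openSquare ((n + b : ℕ) + 1 / 2)),
      ‖h z‖ ≤ Y * ‖Complex.sin (Real.pi * z)‖)
    (hy : ∀ k ∈ Finset.Icc (-(n : ℤ)) n, ‖h (x k)‖ ≤ y) :
    ‖h 0‖ ≤ 8 ^ (2 * b) * (n + 1) ^ 2 * Real.exp (8 * √(T * (2 * n + 1))) *
      (Real.pi * (1 + 2 * T / b) ^ (2 * n + 1) * Y +
        8 * T * (2 * n + 1) * Real.exp (8 * √(4 * T / δ * (2 * n + 1))) * y) := by
  have hy0 : 0 ≤ y := (norm_nonneg _).trans (hy 0 (Finset.mem_Icc.2 ⟨by omega, by omega⟩))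
  have hfactorial : (4 * (n + b : ℕ) : ℝ) ^ (2 * b) * ((n + 1).factorial : ℝ) ^ 2 ≤
      (8 : ℝ) ^ (2 * b) * ((n : ℝ) + 1) ^ 2 * ((n + b).factorial : ℝ) ^ 2 := by
    exact_mod_cast four_mul_add_pow_mul_factorial_sq_le hbn
  refine le_of_mul_le_mul_right ?_ (by positivity : 0 < ((n + b).factorial : ℝ) ^ 2)
  refine (hx.norm_zero_mul_factorial_sq_le hT hb hδ hh hY0 hY hy).trans ?_
  have hscaled := mul_le_mul_of_nonneg_right hfactorial
    (by positivity : 0 ≤ Real.exp (8 * √(T * (2 * n + 1))) *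
      (Real.pi * (1 + 2 * T / b) ^ (2 * n + 1) * Y +
        8 * T * (2 * n + 1) * Real.exp (8 * √(4 * T / δ * (2 * n + 1))) * y))
  linarith

lemma mono {N : ℕ} (hx : IsPerturbedWindow N T δ x) (hn : n ≤ N) : IsPerturbedWindow n T δ x := by
  have hsub : Finset.Icc (-(n : ℤ)) n ⊆ Finset.Icc (-(N : ℤ)) N :=
    Finset.Icc_subset_Icc (by omega) (by omega)
  exact ⟨fun k hk => hx.abs_sub_int_le k (hsub hk),
    fun j hj k hk => hx.le_abs_sub j (hsub hj) k (hsub hk)⟩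

lemma norm_zero_le_of_sq_mul {N : ℕ} {β : ℝ} (hβ : 0 < β) (hβ4 : β ≤ 1 / 4) (hN : 1 ≤ β ^ 2 * N)
    (hx : IsPerturbedWindow N (β ^ 2 * N) δ x) (hδ : 0 < δ)
    (hh : DiffContOnCl ℂ h (openSquare (N + 1 / 2))) (hY0 : 0 ≤ Y)
    (hY : ∀ z ∈ frontier (openSquare (N + 1 / 2)), ‖h z‖ ≤ Y * ‖Complex.sin (Real.pi * z)‖)
    (hy : ∀ k ∈ Finset.Icc (-(N : ℤ)) N, ‖h (x k)‖ ≤ y) :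
    ‖h 0‖ ≤ 16 * N ^ 4 * Real.exp ((32 + 8 * √(8 / δ)) * (β * N)) * (Y + y) := by
  have hβN : 4 * (β ^ 2 * N) ≤ β * N := by nlinarith
  have hTN : β ^ 2 * N ≤ N :=
    mul_le_of_le_one_left N.cast_nonneg (pow_le_one₀ hβ.le (by linarith))
  -- Giving up the `b ~ β * N` outermost nodes on each side keeps the others away from the frontier:
  -- there the factors of the two products differ by a ratio at most `1 + O(β)`.
  obtain ⟨b, hb, hb2⟩ : ∃ b : ℕ, β * N ≤ b ∧ b ≤ 2 * (β * N) :=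
    ⟨_, Nat.le_ceil _, by linarith [Nat.ceil_lt_add_one (by positivity : 0 ≤ β * N)]⟩
  have h2bN : 2 * b ≤ N := by exact_mod_cast (show (2 * b : ℝ) ≤ N by nlinarith)
  obtain ⟨n, rfl⟩ := Nat.exists_eq_add_of_le' (show b ≤ N by omega)
  have hy0 : 0 ≤ y := (norm_nonneg _).trans (hy 0 (Finset.mem_Icc.2 ⟨by omega, by omega⟩))
  have hsub : Finset.Icc (-(n : ℤ)) n ⊆ Finset.Icc (-((n + b : ℕ) : ℤ)) (n + b : ℕ) :=
    Finset.Icc_subset_Icc (by omega) (by omega)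
  refine ((hx.mono (n.le_add_right b)).norm_zero_le hN (by linarith) (by omega) hδ hh hY0 hY
    fun k hk => hy k (hsub hk)).trans (sampling_bound_le (by linarith) hTN hb hb2
      (by nlinarith) ?_ hδ hY0 hy0)
  push_cast
  linarith

end IsPerturbedWindow

lemma exists_forall_eventually_norm_zero_le {δ ε : ℝ} (hδ : 0 < δ) (hε : 0 < ε) :
    ∃ κ > 0, ∀ᶠ N : ℕ in atTop, ∀ (x : ℤ → ℝ) (h : ℂ → ℂ) (Y y : ℝ),
      IsPerturbedWindow N (κ * N) δ x → DiffContOnCl ℂ h (openSquare (N + 1 / 2)) → 0 ≤ Y →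
      (∀ z ∈ frontier (openSquare (N + 1 / 2)), ‖h z‖ ≤ Y * ‖Complex.sin (Real.pi * z)‖) →
      (∀ k ∈ Finset.Icc (-(N : ℤ)) N, ‖h (x k)‖ ≤ y) →
      ‖h 0‖ ≤ Real.exp (ε * N) * (Y + y) := by
  set D := 32 + 8 * √(8 / δ)
  have hD0 : 0 < D := by positivity
  set β := min (1 / 4) (ε / (2 * D))
  have hβ : 0 < β := by positivity
  have hDβ : D * β ≤ ε / 2 := by
    calc D * β ≤ D * (ε / (2 * D)) := by gcongr; exact min_le_right _ _
      _ = ε / 2 := by field_simp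
  have hlarge : ∀ᶠ N : ℕ in atTop, 1 ≤ β ^ 2 * N :=
    (tendsto_natCast_atTop_atTop.const_mul_atTop (by positivity)).eventually_ge_atTop 1
  have hpoly : ∀ᶠ N : ℕ in atTop, 16 * (N : ℝ) ^ 4 ≤ Real.exp (ε / 2 * N) := by
    have := (isLittleO_pow_exp_pos_mul_atTop 4 (half_pos hε)).comp_tendsto
      tendsto_natCast_atTop_atTop
    filter_upwards [this.bound (show (0 : ℝ) < 1 / 16 by norm_num)] with N hN
    simp only [Function.comp_apply, norm_pow, RCLike.norm_natCast, Real.norm_eq_abs,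
      Real.abs_exp] at hN
    linarith
  refine ⟨β ^ 2, by positivity, ?_⟩
  filter_upwards [hlarge, hpoly] with N hN hpolyN x h Y y hx hh hY0 hY hy
  have hy0 : 0 ≤ y := (norm_nonneg _).trans (hy 0 (Finset.mem_Icc.2 ⟨by omega, by omega⟩))
  calc ‖h 0‖ ≤ 16 * N ^ 4 * Real.exp (D * (β * N)) * (Y + y) :=
        hx.norm_zero_le_of_sq_mul hβ (min_le_left _ _) hN hδ hh hY0 hY hy
    _ ≤ Real.exp (ε / 2 * N) * Real.exp (ε / 2 * N) * (Y + y) := by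
        rw [← mul_assoc]
        gcongr
    _ = Real.exp (ε * N) * (Y + y) := by rw [← Real.exp_add]; ring_nf

end PerturbedWindow

section HalfPlane

lemma norm_exp_neg_mul_sq (a : ℝ) (z : ℂ) :
    ‖Complex.exp (-(a * z ^ 2))‖ = Real.exp (-(a * (z.re ^ 2 - z.im ^ 2))) := by
  rw [Complex.norm_exp, neg_re, re_ofReal_mul, sq z, mul_re, sq, sq]

lemma im_sq_sub_re_sq_le_of_mem_frontier_openSquare {R : ℝ} {z : ℂ}
    (hz : z ∈ frontier (openSquare R)) : z.im ^ 2 - z.re ^ 2 ≤ R * (2 * |z.im| - R) := by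
  have him := abs_im_le_of_mem_closure_openSquare (frontier_subset_closure hz)
  rw [← sq_abs z.re, ← sq_abs z.im]
  rcases abs_re_eq_or_abs_im_eq_of_mem_frontier_openSquare hz with h | h
  · nlinarith [abs_nonneg z.im]
  · nlinarith [sq_nonneg |z.re|]

variable {g : ℂ → ℂ} {M η C p : ℝ}

lemma diffContOnCl_comp_mul_gaussian {R : ℝ} (hη : 0 < η) (hp : η * R ≤ p)
    (hg : DiffContOnCl ℂ g {z | 0 < z.re}) (a : ℝ) :
    DiffContOnCl ℂ (fun z => g (p + η * z) * Complex.exp (-(a * z ^ 2))) (openSquare R) := by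
  have haff : DiffContOnCl ℂ (fun z : ℂ => p + η * z) (openSquare R) :=
    Differentiable.diffContOnCl (by fun_prop)
  have hexp : DiffContOnCl ℂ (fun z : ℂ => Complex.exp (-(a * z ^ 2))) (openSquare R) :=
    Differentiable.diffContOnCl (by fun_prop)
  refine (hg.comp haff fun z hz => ?_).smul hexp
  have hzR : -R < z.re := hz.1.1
  change 0 < (p + η * z : ℂ).re
  rw [add_re, ofReal_re, re_ofReal_mul]
  nlinarith

lemma norm_comp_mul_gaussian_le_of_mem_frontier {N : ℕ} (hη : 0 < η) (hMη : M * η < Real.pi)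
    (hp : η * (N + 1 / 2) ≤ p) (hg : ∀ z, 0 ≤ z.re → ‖g z‖ ≤ C * Real.exp (M * |z.im|)) {z : ℂ}
    (hz : z ∈ frontier (openSquare (N + 1 / 2))) :
    ‖g (p + η * z) *
        Complex.exp (-(((Real.pi - M * η) / 2 / (N + 1 / 2) : ℝ) * z ^ 2))‖ ≤
      4 * C * Real.exp (-((Real.pi - M * η) / 2 * N)) * ‖Complex.sin (Real.pi * z)‖ := by
  set c := (Real.pi - M * η) / 2 with hc
  set R : ℝ := N + 1 / 2 with hR
  have hc0 : 0 < c := by linarith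
  have hR0 : 0 < R := by positivity
  have hC : 0 ≤ C := by simpa using (norm_nonneg _).trans (hg 0 le_rfl)
  have hre : 0 ≤ (p + η * z : ℂ).re := by
    have := (abs_le.1 (abs_re_le_of_mem_closure_openSquare (frontier_subset_closure hz))).1
    rw [add_re, ofReal_re, re_ofReal_mul]
    nlinarith
  have hgz := hg _ hre
  rw [add_im, ofReal_im, zero_add, im_ofReal_mul, abs_mul, abs_of_pos hη, ← mul_assoc] at hgz
  have hexponent : M * η * |z.im| + -(c / R * (z.re ^ 2 - z.im ^ 2)) ≤
      -(c * N) + Real.pi * |z.im| := by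
    have hquad := mul_le_mul_of_nonneg_left (im_sq_sub_re_sq_le_of_mem_frontier_openSquare hz)
      (div_pos hc0 hR0).le
    rw [← mul_assoc, div_mul_cancel₀ c hR0.ne'] at hquad
    have hpi : Real.pi = M * η + 2 * c := by rw [hc]; ring
    rw [hpi]
    nlinarith
  calc _ ≤ C * Real.exp (M * η * |z.im|) * Real.exp (-(c / R * (z.re ^ 2 - z.im ^ 2))) := by
        rw [norm_mul, norm_exp_neg_mul_sq]
        gcongr
    _ ≤ C * Real.exp (-(c * N) + Real.pi * |z.im|) := by
        rw [mul_assoc, ← Real.exp_add]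
        gcongr
    _ = 4 * C * Real.exp (-(c * N)) * (Real.exp (Real.pi * |z.im|) / 4) := by
        rw [Real.exp_add]
        ring
    _ ≤ _ := by
        gcongr
        exact exp_pi_mul_abs_im_div_four_le_norm_sin hz

lemma exists_forall_eventually_norm_le {δ ε : ℝ} (hη : 0 < η) (hMη : M * η < Real.pi) (hδ : 0 < δ)
    (hε : 0 < ε) :
    ∃ κ > 0, ∀ᶠ N : ℕ in atTop, ∀ (p : ℝ) (x : ℤ → ℝ) (g : ℂ → ℂ) (C y : ℝ),
      η * (N + 1 / 2) ≤ p → IsPerturbedWindow N (κ * N) δ (fun k => (x k - p) / η) →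
      DiffContOnCl ℂ g {z | 0 < z.re} → (∀ z, 0 ≤ z.re → ‖g z‖ ≤ C * Real.exp (M * |z.im|)) →
      (∀ k ∈ Finset.Icc (-(N : ℤ)) N, ‖g (x k)‖ ≤ y) →
      ‖g p‖ ≤ Real.exp (ε * N) * (4 * C * Real.exp (-((Real.pi - M * η) / 2 * N)) + y) := by
  obtain ⟨κ, hκ, hκN⟩ := exists_forall_eventually_norm_zero_le hδ hε
  refine ⟨κ, hκ, hκN.mono fun N hN p x g C y hp hx hg hgM hy => ?_⟩
  have hC : 0 ≤ C := by simpa using (norm_nonneg _).trans (hgM 0 le_rfl)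
  have hc : 0 < (Real.pi - M * η) / 2 := by linarith
  have hmain := hN _ _ _ y hx
    (diffContOnCl_comp_mul_gaussian hη hp hg ((Real.pi - M * η) / 2 / (N + 1 / 2)))
    (by positivity) (fun z hz => norm_comp_mul_gaussian_le_of_mem_frontier hη hMη hp hgM hz)
    fun k hk => ?_
  · simpa using hmain
  · have harg : (p : ℂ) + η * ((x k - p) / η : ℝ) = x k := by
      rw [← ofReal_mul, ← ofReal_add, mul_div_cancel₀ _ hη.ne', add_sub_cancel]
    rw [harg, norm_mul, norm_exp_neg_mul_sq, ofReal_re, ofReal_im]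
    refine (mul_le_of_le_one_right (norm_nonneg _) (Real.exp_le_one_iff.2 ?_)).trans (hy k hk)
    rw [neg_nonpos, zero_pow two_ne_zero, sub_zero]
    exact mul_nonneg (div_nonneg hc.le (by positivity)) (sq_nonneg _)

end HalfPlane

section Sequence

variable {η δ : ℝ} {ξ : ℕ → ℝ}

lemma tendsto_atTop_of_tendsto_div (hη : 0 < η)
    (hlim : Tendsto (fun n : ℕ => ξ n / n) atTop (nhds η)) : Tendsto ξ atTop atTop := by
  refine (tendsto_natCast_atTop_atTop.atTop_mul_pos hη hlim).congr' ?_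
  filter_upwards [eventually_ne_atTop 0] with n hn
  field_simp

lemma eventually_abs_div_sub_le (hη : 0 < η)
    (hlim : Tendsto (fun n : ℕ => ξ n / n) atTop (nhds η)) {κ : ℝ} (hκ : 0 < κ) :
    ∀ᶠ n : ℕ in atTop, |ξ n / η - n| ≤ κ * n := by
  filter_upwards [Metric.tendsto_nhds.1 hlim (κ * η) (by positivity), eventually_gt_atTop 0]
    with n hn hn0
  have hn0' : (0 : ℝ) < n := by exact_mod_cast hn0
  rw [show ξ n / η - n = (ξ n / n - η) * (n / η) by field_simp, abs_mul,
    abs_of_pos (by positivity : 0 < n / η)]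
  rw [Real.dist_eq] at hn
  calc |ξ n / n - η| * (n / η) ≤ κ * η * (n / η) := by gcongr
    _ = κ * n := by field_simp

lemma eventually_isPerturbedWindow (hη : 0 < η)
    (hsep : ∀ m n : ℕ, δ * |(m : ℝ) - n| ≤ |ξ m - ξ n|)
    (hlim : Tendsto (fun n : ℕ => ξ n / n) atTop (nhds η)) {κ : ℝ} (hκ : 0 < κ) :
    ∀ᶠ N : ℕ in atTop, ∀ p : ℝ, |p / η - 2 * N| ≤ 2 →
      IsPerturbedWindow N (κ * N) (δ / η) (fun k => (ξ (2 * N + k).toNat - p) / η) := by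
  have hclose := eventually_forall_ge_atTop.2
    (eventually_abs_div_sub_le hη hlim (κ := κ / 6) (by positivity))
  have hlarge : ∀ᶠ N : ℕ in atTop, 2 ≤ κ / 2 * N :=
    (tendsto_natCast_atTop_atTop.const_mul_atTop (by positivity)).eventually_ge_atTop _
  filter_upwards [hclose, hlarge] with N hcloseN hlargeN p hp
  have hcast : ∀ k ∈ Finset.Icc (-(N : ℤ)) N, (((2 * N + k).toNat : ℕ) : ℝ) = 2 * N + k :=
    fun k hk => by
      have : (((2 * N + k).toNat : ℕ) : ℤ) = 2 * N + k := by
        rw [Finset.mem_Icc] at hk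
        omega
      exact_mod_cast this
  refine ⟨fun k hk => ?_, fun j hj k hk => ?_⟩
  · have hξ := hcloseN (2 * N + k).toNat (by rw [Finset.mem_Icc] at hk; omega)
    rw [hcast k hk] at hξ
    have hindex : κ / 6 * (2 * N + k) ≤ κ / 6 * (3 * N) := by
      gcongr
      linarith [le_of_abs_le (abs_intCast_le_of_mem_Icc hk)]
    calc |(ξ (2 * N + k).toNat - p) / η - k|
        = |(ξ (2 * N + k).toNat / η - (2 * N + k)) - (p / η - 2 * N)| := by ring_nf
      _ ≤ κ / 6 * (2 * N + k) + 2 := (abs_sub _ _).trans (add_le_add hξ hp)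
      _ ≤ κ * N := by linarith
  · rw [← sub_div, sub_sub_sub_cancel_right, abs_div, abs_of_pos hη, div_mul_eq_mul_div]
    refine div_le_div_of_nonneg_right ((le_of_eq ?_).trans (hsep _ _)) hη.le
    rw [hcast j hj, hcast k hk, add_sub_add_left_eq_sub]

lemma eventually_norm_le_mul_exp_index {g : ℂ → ℂ} {C τ : ℝ} (hη : 0 < η)
    (hlim : Tendsto (fun n : ℕ => ξ n / n) atTop (nhds η)) (hτ : 0 < τ) (hC : 0 ≤ C)
    (hg : ∀ᶠ n in atTop, ‖g (ξ n)‖ ≤ C * Real.exp (-τ * ξ n)) :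
    ∀ᶠ n : ℕ in atTop, ‖g (ξ n)‖ ≤ C * Real.exp (-(τ * η / 2 * n)) := by
  filter_upwards [hg, hlim.eventually (eventually_ge_nhds (half_lt_self hη)), eventually_gt_atTop 0]
    with n hn hξn hn0
  refine hn.trans ?_
  gcongr
  rw [le_div_iff₀ (by exact_mod_cast hn0)] at hξn
  nlinarith

variable {M τ : ℝ}

lemma exists_forall_eventually_norm_le_exp_nat (hη : 0 < η) (hMη : M * η < Real.pi)
    (hδ : 0 < δ) (hsep : ∀ m n : ℕ, δ * |(m : ℝ) - n| ≤ |ξ m - ξ n|)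
    (hlim : Tendsto (fun n : ℕ => ξ n / n) atTop (nhds η)) (hτ : 0 < τ) :
    ∃ ρ > 0, ∀ (g : ℂ → ℂ) (C : ℝ), DiffContOnCl ℂ g {z | 0 < z.re} →
      (∀ z, 0 ≤ z.re → ‖g z‖ ≤ C * Real.exp (M * |z.im|)) →
      (∀ᶠ n in atTop, ‖g (ξ n)‖ ≤ C * Real.exp (-τ * ξ n)) →
      ∀ᶠ N : ℕ in atTop, ∀ p : ℝ, 2 * N ≤ p / η → p / η ≤ 2 * N + 2 →
        ‖g p‖ ≤ 5 * C * Real.exp (-(ρ * N)) := by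
  set ρ := min ((Real.pi - M * η) / 2) (τ * η / 2)
  have hρ : 0 < ρ := lt_min (by linarith) (by positivity)
  obtain ⟨κ, hκ, hsample⟩ := exists_forall_eventually_norm_le hη hMη (div_pos hδ hη) (half_pos hρ)
  refine ⟨ρ / 2, half_pos hρ, fun g C hg hgM hgξ => ?_⟩
  have hC : 0 ≤ C := by simpa using (norm_nonneg _).trans (hgM 0 le_rfl)
  filter_upwards [hsample, eventually_isPerturbedWindow hη hsep hlim hκ, eventually_ge_atTop 1,
    eventually_forall_ge_atTop.2 (eventually_norm_le_mul_exp_index hη hlim hτ hC hgξ)]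
    with N hsampleN hwindow hN hnodes p hNp hpN
  have hN1 : (1 : ℝ) ≤ N := by exact_mod_cast hN
  have hnode : ∀ k ∈ Finset.Icc (-(N : ℤ)) N,
      ‖g (ξ (2 * N + k).toNat)‖ ≤ C * Real.exp (-(ρ * N)) := fun k hk => by
    have hNk : N ≤ (2 * N + k).toNat := by rw [Finset.mem_Icc] at hk; omega
    refine (hnodes _ hNk).trans ?_
    gcongr
    exact min_le_right _ _
  calc ‖g p‖ ≤ Real.exp (ρ / 2 * N) * (4 * C * Real.exp (-((Real.pi - M * η) / 2 * N)) +
        C * Real.exp (-(ρ * N))) :=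
        hsampleN p (fun k => ξ (2 * N + k).toNat) g C _ (by rw [← le_div_iff₀' hη]; linarith)
          (hwindow p (abs_le.2 ⟨by linarith, by linarith⟩)) hg hgM hnode
    _ ≤ Real.exp (ρ / 2 * N) * (4 * C * Real.exp (-(ρ * N)) + C * Real.exp (-(ρ * N))) := by
        gcongr
        exact min_le_left _ _
    _ = 5 * C * (Real.exp (ρ / 2 * N) * Real.exp (-(ρ * N))) := by ring
    _ = 5 * C * Real.exp (-(ρ / 2 * N)) := by
        rw [← Real.exp_add]
        ring_nf

lemma exists_forall_eventually_norm_le_exp (hη : 0 < η) (hMη : M * η < Real.pi)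
    (hδ : 0 < δ) (hsep : ∀ m n : ℕ, δ * |(m : ℝ) - n| ≤ |ξ m - ξ n|)
    (hlim : Tendsto (fun n : ℕ => ξ n / n) atTop (nhds η)) (hτ : 0 < τ) :
    ∃ σ > 0, ∀ (g : ℂ → ℂ) (C : ℝ), DiffContOnCl ℂ g {z | 0 < z.re} →
      (∀ z, 0 ≤ z.re → ‖g z‖ ≤ C * Real.exp (M * |z.im|)) →
      (∀ᶠ n in atTop, ‖g (ξ n)‖ ≤ C * Real.exp (-τ * ξ n)) →
      ∃ K, ∀ᶠ x : ℝ in atTop, ‖g x‖ ≤ K * Real.exp (-σ * x) := by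
  obtain ⟨ρ, hρ, hdecay⟩ := exists_forall_eventually_norm_le_exp_nat hη hMη hδ hsep hlim hτ
  refine ⟨ρ / (2 * η), by positivity, fun g C hg hgM hgξ => ⟨5 * C * Real.exp ρ, ?_⟩⟩
  have hC : 0 ≤ C := by simpa using (norm_nonneg _).trans (hgM 0 le_rfl)
  have hfloor : Tendsto (fun x : ℝ => ⌊x / (2 * η)⌋₊) atTop atTop :=
    tendsto_nat_floor_atTop.comp (tendsto_id.atTop_div_const (by positivity))
  filter_upwards [eventually_ge_atTop 0, hfloor.eventually (hdecay g C hg hgM hgξ)]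
    with x hx hdecayx
  have hhalf : x / (2 * η) * 2 = x / η := by field_simp
  have hfloor_le : ⌊x / (2 * η)⌋₊ ≤ x / (2 * η) := Nat.floor_le (by positivity)
  have hlt_floor : x / (2 * η) < ⌊x / (2 * η)⌋₊ + 1 := Nat.lt_floor_add_one _
  refine (hdecayx x (by linarith) (by linarith)).trans ?_
  rw [mul_assoc _ (Real.exp ρ), ← Real.exp_add]
  gcongr
  rw [show -(ρ / (2 * η)) * x = -(ρ * (x / (2 * η))) by ring]
  nlinarith

end Sequence

section PhragmenLindelof

variable {f : ℂ → ℂ}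

lemma norm_mul_exp_le_iff (f : ℂ → ℂ) {k z : ℂ} {C t : ℝ} (ht : (k * z).re = -t) :
    ‖f z * Complex.exp (k * z)‖ ≤ C ↔ ‖f z‖ ≤ C * Real.exp t := by
  rw [norm_mul, Complex.norm_exp, ht, Real.exp_neg, ← div_eq_mul_inv, div_le_iff₀ (Real.exp_pos _)]

lemma exists_isBigO_mul_exp {s : Set ℂ} {A B : ℝ}
    (hexp : ∀ z ∈ s, ‖f z‖ ≤ A * Real.exp (B * ‖z‖)) (k : ℂ) :
    ∃ c < (2 : ℝ), ∃ B : ℝ, (fun z => f z * Complex.exp (k * z)) =O[Bornology.cobounded ℂ ⊓ 𝓟 s]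
      fun z => Real.exp (B * ‖z‖ ^ c) := by
  refine ⟨1, one_lt_two, B + ‖k‖, Asymptotics.IsBigO.of_bound A ?_⟩
  filter_upwards [mem_inf_of_right (mem_principal_self s)] with z hz
  rw [norm_mul, Real.norm_eq_abs, Real.abs_exp, Real.rpow_one, add_mul, Real.exp_add, ← mul_assoc,
    ← norm_mul k z]
  exact mul_le_mul (hexp z hz) (norm_exp_le_exp_norm _) (norm_nonneg _)
    ((norm_nonneg _).trans (hexp z hz))

lemma norm_le_mul_exp_re_add_abs_im {C M a : ℝ} (hf : DiffContOnCl ℂ f {z | 0 < z.re})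
    (hexp : ∃ A B : ℝ, ∀ z, 0 ≤ z.re → ‖f z‖ ≤ A * Real.exp (B * ‖z‖))
    (hup : ∀ y : ℝ, 0 ≤ y → ‖f (y * I)‖ ≤ C * Real.exp (M * y))
    (hdown : ∀ y : ℝ, 0 ≤ y → ‖f (-(y * I))‖ ≤ C * Real.exp (M * y))
    (hreal : ∀ x : ℝ, 0 ≤ x → ‖f x‖ ≤ C * Real.exp (a * x)) {z : ℂ} (hz : 0 ≤ z.re) :
    ‖f z‖ ≤ C * Real.exp (a * z.re + M * |z.im|) := by
  obtain ⟨A, B, hexp⟩ := hexp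
  have hdiff : ∀ (k : ℂ) (t : Set ℝ), DiffContOnCl ℂ (fun w => f w * Complex.exp (k * w))
      (Set.Ioi 0 ×ℂ t) := fun k t =>
    (hf.mono fun w hw => hw.1).smul (Differentiable.diffContOnCl (by fun_prop))
  have hgrowth {t : Set ℝ} : ∀ w ∈ Set.Ioi 0 ×ℂ t, ‖f w‖ ≤ A * Real.exp (B * ‖w‖) :=
    fun w hw => hexp w (Set.mem_Ioi.1 hw.1).le
  rcases le_total 0 z.im with him | him
  · refine (norm_mul_exp_le_iff f (k := -a + M * I) (by simp [abs_of_nonneg him]; ring)).1 <|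
      PhragmenLindelof.quadrant_I (f := fun w => f w * Complex.exp ((-a + M * I) * w)) (hdiff _ _)
        (exists_isBigO_mul_exp hgrowth _) (fun x hx => ?_) (fun y hy => ?_) hz him
    · exact (norm_mul_exp_le_iff f (by simp)).2 (hreal x hx)
    · exact (norm_mul_exp_le_iff f (by simp)).2 (hup y hy)
  · refine (norm_mul_exp_le_iff f (k := -a - M * I) (by simp [abs_of_nonpos him]; ring)).1 <|
      PhragmenLindelof.quadrant_IV (f := fun w => f w * Complex.exp ((-a - M * I) * w)) (hdiff _ _)
        (exists_isBigO_mul_exp hgrowth _) (fun x hx => ?_) (fun y hy => ?_) hz him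
    · exact (norm_mul_exp_le_iff f (by simp)).2 (hreal x hx)
    · refine (norm_mul_exp_le_iff f (t := M * -y) (by simp)).2 ?_
      simpa using hdown (-y) (neg_nonneg.2 hy)

end PhragmenLindelof

section Sampling

variable {f : ℂ → ℂ} {ξ : ℕ → ℝ} {M η δ : ℝ}

lemma exists_forall_exists_norm_le_mul_exp_sub {a b C₁ C₂ : ℝ} (hη : 0 < η) (hδ : 0 < δ)
    (hMη : M * η < Real.pi) (hf : DiffContOnCl ℂ f {z | 0 < z.re})
    (hexp : ∃ A B : ℝ, ∀ z, 0 ≤ z.re → ‖f z‖ ≤ A * Real.exp (B * ‖z‖))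
    (hup : ∀ y : ℝ, 0 ≤ y → ‖f (y * I)‖ ≤ C₁ * Real.exp (M * y))
    (hdown : ∀ y : ℝ, 0 ≤ y → ‖f (-(y * I))‖ ≤ C₂ * Real.exp (M * y))
    (hsep : ∀ m n : ℕ, δ * |(m : ℝ) - n| ≤ |ξ m - ξ n|)
    (hlim : Tendsto (fun n : ℕ => ξ n / n) atTop (nhds η))
    (hnode : ∀ᶠ n in atTop, ‖f (ξ n)‖ ≤ Real.exp (a * ξ n)) (hab : a < b) :
    ∃ σ > 0, ∀ c, b ≤ c → (∃ K, ∀ x : ℝ, 0 ≤ x → ‖f x‖ ≤ K * Real.exp (c * x)) →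
      ∃ K, ∀ x : ℝ, 0 ≤ x → ‖f x‖ ≤ K * Real.exp ((c - σ) * x) := by
  obtain ⟨σ, hσ, hdecay⟩ :=
    exists_forall_eventually_norm_le_exp hη hMη hδ hsep hlim (sub_pos.2 hab)
  refine ⟨σ, hσ, fun c hbc ⟨K, hK⟩ => ?_⟩
  set C := max (max C₁ C₂) (max K 1)
  have hCbound {F E L : ℝ} (hFL : F ≤ L * Real.exp E) (hLC : L ≤ C) : F ≤ C * Real.exp E :=
    hFL.trans (by gcongr)
  have hhalf : ∀ z : ℂ, 0 ≤ z.re → ‖f z‖ ≤ C * Real.exp (c * z.re + M * |z.im|) := fun z hz =>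
    norm_le_mul_exp_re_add_abs_im hf hexp (fun y hy => hCbound (hup y hy) (by simp [C]))
      (fun y hy => hCbound (hdown y hy) (by simp [C]))
      (fun x hx => hCbound (hK x hx) (by simp [C])) hz
  have hdamped : ∀ (z : ℂ) (D : ℝ),
      ‖f z * Complex.exp (-c * z)‖ ≤ D ↔ ‖f z‖ ≤ D * Real.exp (c * z.re) :=
    fun z D => norm_mul_exp_le_iff f (by simp)
  have hdamped_half : ∀ z : ℂ, 0 ≤ z.re →
      ‖f z * Complex.exp (-c * z)‖ ≤ C * Real.exp (M * |z.im|) := fun z hz => by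
    rw [hdamped, mul_assoc, ← Real.exp_add, add_comm]
    exact hhalf z hz
  have hdamped_node : ∀ᶠ n in atTop,
      ‖f (ξ n) * Complex.exp (-c * ξ n)‖ ≤ C * Real.exp (-(b - a) * ξ n) := by
    filter_upwards [hnode, (tendsto_atTop_of_tendsto_div hη hlim).eventually_ge_atTop 0]
      with n hn hξn
    rw [hdamped, ofReal_re, mul_assoc, ← Real.exp_add]
    refine hCbound (hn.trans ?_) (show (1 : ℝ) ≤ C by simp [C])
    rw [one_mul, Real.exp_le_exp]
    nlinarith
  obtain ⟨L, hL⟩ := hdecay _ C (hf.smul (Differentiable.diffContOnCl (by fun_prop)))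
    hdamped_half hdamped_node
  refine exists_forall_le_mul_exp_of_eventually (C := L) hK (hL.mono fun x hx => ?_)
  rw [smul_eq_mul, hdamped, ofReal_re, mul_assoc, ← Real.exp_add, ← add_mul] at hx
  rwa [sub_eq_neg_add]

lemma exists_norm_le_mul_exp_of_forall_nodes {a b C₁ C₂ : ℝ} (hη : 0 < η) (hδ : 0 < δ)
    (hMη : M * η < Real.pi) (hf : DiffContOnCl ℂ f {z | 0 < z.re})
    (hexp : ∃ A B : ℝ, ∀ z, 0 ≤ z.re → ‖f z‖ ≤ A * Real.exp (B * ‖z‖))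
    (hup : ∀ y : ℝ, 0 ≤ y → ‖f (y * I)‖ ≤ C₁ * Real.exp (M * y))
    (hdown : ∀ y : ℝ, 0 ≤ y → ‖f (-(y * I))‖ ≤ C₂ * Real.exp (M * y))
    (hsep : ∀ m n : ℕ, δ * |(m : ℝ) - n| ≤ |ξ m - ξ n|)
    (hlim : Tendsto (fun n : ℕ => ξ n / n) atTop (nhds η))
    (hnode : ∀ᶠ n in atTop, ‖f (ξ n)‖ ≤ Real.exp (a * ξ n)) (hab : a < b) :
    ∃ K, ∀ x : ℝ, 0 ≤ x → ‖f x‖ ≤ K * Real.exp (b * x) := by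
  obtain ⟨σ, hσ, hstep⟩ := exists_forall_exists_norm_le_mul_exp_sub hη hδ hMη hf hexp hup hdown
    hsep hlim hnode hab
  obtain ⟨A, B, hAB⟩ := hexp
  refine descend_to_of_forall_sub (p := fun c => ∃ K, ∀ x : ℝ, 0 ≤ x → ‖f x‖ ≤ K * Real.exp (c * x))
    hσ ?_ hstep ⟨A, fun x hx => ?_⟩ (b := B)
  · rintro c d hcd ⟨K, hK⟩
    have hK0 : 0 ≤ K := by simpa using (norm_nonneg _).trans (hK 0 le_rfl)
    exact ⟨K, fun x hx => (hK x hx).trans (by gcongr)⟩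
  · simpa [abs_of_nonneg hx] using hAB x hx

end Sampling

theorem bernstein_type_limsup_general {M η δ : ℝ} (hη : 0 < η) (hδ : 0 < δ)
    (hMη : M * η < Real.pi) {f : ℂ → ℂ} (hf : DiffContOnCl ℂ f {z | 0 < z.re})
    (hexp : ∃ A B : ℝ, ∀ z, 0 ≤ z.re → ‖f z‖ ≤ A * Real.exp (B * ‖z‖))
    (hup : limsup (fun y : ℝ => elogDiv ‖f (y * I)‖ y) atTop ≤ (M : EReal))
    (hdown : limsup (fun y : ℝ => elogDiv ‖f (-(y * I))‖ y) atTop ≤ (M : EReal))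
    {ξ : ℕ → ℝ} (hsep : ∀ m n : ℕ, δ * |(m : ℝ) - n| ≤ |ξ m - ξ n|)
    (hlim : Tendsto (fun n : ℕ => ξ n / n) atTop (nhds η)) :
    limsup (fun n : ℕ => elogDiv ‖f (ξ n)‖ (ξ n)) atTop =
      limsup (fun r : ℝ => elogDiv ‖f r‖ r) atTop := by
  have hξ : Tendsto ξ atTop atTop := tendsto_atTop_of_tendsto_div hη hlim
  refine le_antisymm (hξ.limsup_comp_le_limsup (u := fun r : ℝ => elogDiv ‖f r‖ r))
    (le_of_forall_gt_imp_ge_of_dense fun c hc => ?_)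
  obtain ⟨a, hξa, hac⟩ := EReal.lt_iff_exists_real_btwn.1 hc
  obtain ⟨b, hab, hbc⟩ := EReal.lt_iff_exists_real_btwn.1 hac
  obtain ⟨M', hMM', hM'⟩ := exists_between ((lt_div_iff₀ hη).2 hMη)
  obtain ⟨A, B, hAB⟩ := hexp
  obtain ⟨C₁, hC₁⟩ := exists_norm_le_mul_exp_of_limsup_le_lt (A := A) (B := B) hMM'
    (fun y hy => by simpa [abs_of_nonneg hy] using hAB (y * I) (by simp)) hup
  obtain ⟨C₂, hC₂⟩ := exists_norm_le_mul_exp_of_limsup_le_lt (A := A) (B := B) hMM'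
    (fun y hy => by simpa [abs_of_nonneg hy] using hAB (-(y * I)) (by simp)) hdown
  obtain ⟨K, hK⟩ := exists_norm_le_mul_exp_of_forall_nodes hη hδ ((lt_div_iff₀ hη).1 hM') hf
    ⟨A, B, hAB⟩ hC₁ hC₂ hsep hlim
    (eventually_le_exp_of_limsup_elogDiv_lt (fun _ => norm_nonneg _) hξ hξa)
    (EReal.coe_lt_coe_iff.1 hab)
  exact (limsup_elogDiv_le (fun _ => norm_nonneg _) tendsto_id
    ((eventually_ge_atTop 0).mono hK)).trans hbc.le

theorem bernstein_type_limsup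
    (M η : ℝ) (hM : 0 < M) (hη : 0 < η) (hMη : M * η < Real.pi)
    (f : ℂ → ℂ) (hf : Differentiable ℂ f)
    (hexp : ∃ A B : ℝ, 0 < A ∧ 0 < B ∧ ∀ s : ℂ, ‖f s‖ ≤ A * Real.exp (B * ‖s‖))
    (hup : limsup (fun y : ℝ => elogDiv ‖f (y * I)‖ y) atTop ≤ (M : EReal))
    (hdown : limsup (fun y : ℝ => elogDiv ‖f (-(y * I))‖ y) atTop ≤ (M : EReal))
    (ξ : ℕ → ℝ) (hpos : ∀ n, 0 < ξ n)
    (hsep : ∀ m n : ℕ, (η / 2) * |(m : ℝ) - n| ≤ |ξ m - ξ n|)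
    (hlim : Tendsto (fun n : ℕ => ξ n / n) atTop (nhds η)) :
    limsup (fun n : ℕ => elogDiv ‖f (ξ n)‖ (ξ n)) atTop
      = limsup (fun r : ℝ => elogDiv ‖f r‖ r) atTop :=
  let ⟨A, B, _, _, hAB⟩ := hexp
  bernstein_type_limsup_general hη (half_pos hη) hMη hf.diffContOnCl ⟨A, B, fun z _ => hAB z⟩ hup
    hdown hsep hlim
end

section
/- Fix η > 0 and 0 < σ_R < 1, and a nonnegative integer m. Set α_n = exp((n - 1/4)η) and β_n = exp((n + 1/4)η) for n ∈ ℕ. Let A be the set of positive integers n for which there exists r ∈ ((n - 1/4)η, (n + 1/4)η] with |ρ(r)| ≤ e^{-σ_R r}, where ρ : [0,∞) → ℂ is any continuous function. If ∑_p |ρ(log p)| / (log p)^m < ∞ (sum over primes), then the complement ℕ \ A is finite. -/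
open Filter

/-!
If `n ∉ A`, each large prime `p` with `log p` in the `n`-th window contributes at least `log p / p`
to the convergent series, so it is enough that the primes in `(x, r x]` satisfy `∑ log p ≫ x`.

This weak form of the prime number theorem comes from the continuity of `-ζ'/ζ(s) - 1/(s - 1)` up to
the line `Re s = 1`. Choose an integrable `φ` with positive integral which is nonpositive outside
`[-δ, δ]` and is the Fourier transform of a compactly supported function, and integrate `φ(v - y)`
against `∑ Λ(n)/n δ_{log n}`. By Fubini the result depends only on the Laplace transform near a
compact piece of the imaginary axis, and by the Riemann–Lebesgue lemma it tends to `∫ φ > 0` as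
`y → ∞`. Yet it is at most `sup φ` times the mass of `[y - δ, y + δ]`, which is therefore bounded
below.
-/

noncomputable section

open Topology MeasureTheory Real FourierTransform

section MinorantKernel

lemma integral_one_sub_mul_cos {a : ℝ} (ha : a ≠ 0) :
    ∫ u in (0 : ℝ)..1, (1 - u) * cos (a * u) = (1 - cos a) / a ^ 2 := by
  have hderiv (u : ℝ) : HasDerivAt (fun u ↦ (1 - u) * (sin (a * u) / a) - cos (a * u) / a ^ 2)
      ((1 - u) * cos (a * u)) u := by
    have hlin : HasDerivAt (fun u ↦ a * u) a u := by simpa using (hasDerivAt_id u).const_mul a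
    refine ((((hasDerivAt_id u).const_sub 1).mul (hlin.sin.div_const a)).sub
      (hlin.cos.div_const (a ^ 2))).congr_deriv ?_
    simp only [id_eq]
    field_simp
    ring
  rw [intervalIntegral.integral_eq_sub_of_hasDerivAt (fun u _ ↦ hderiv u)
    (Continuous.intervalIntegrable (by fun_prop) _ _)]
  simp only [sub_self, zero_mul, mul_one, mul_zero, sin_zero, cos_zero, zero_div, sub_zero]
  ring

lemma integral_sin_const_mul {a : ℝ} (ha : a ≠ 0) :
    ∫ u in (0 : ℝ)..1, sin (a * u) = (1 - cos a) / a := by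
  rw [intervalIntegral.integral_comp_mul_left _ ha, integral_sin]
  simp [div_eq_inv_mul]

/-- Profile of a Selberg-type minorant: its cosine transform on `[0, 1]` is
`(1 + cos t) * (3π² - t²) / (π² - t²)²`, where the double zeros of `1 + cos t` cancel the double
poles at `±π` and the factor `3π² - t²` makes the transform nonpositive away from the origin. -/
def minorantProfile (u : ℝ) : ℝ :=
  (1 - u) * cos (π * u) + 2 / π * sin (π * u)

/-- The cosine transform of `minorantProfile`, an integrable function of exponential type `1` which
is nonpositive outside `[-2π, 2π]`. -/
def minorantKernel (t : ℝ) : ℝ :=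
  ∫ u in (0 : ℝ)..1, minorantProfile u * cos (t * u)

@[fun_prop]
lemma continuous_minorantProfile : Continuous minorantProfile := by
  unfold minorantProfile
  fun_prop

lemma minorantKernel_eq {t : ℝ} (ht : t ^ 2 ≠ π ^ 2) :
    minorantKernel t = (1 + cos t) * (3 * π ^ 2 - t ^ 2) / (π ^ 2 - t ^ 2) ^ 2 := by
  have hadd : t + π ≠ 0 := fun h ↦ ht (by rw [eq_neg_of_add_eq_zero_left h, neg_sq])
  have hsub : π - t ≠ 0 := fun h ↦ ht (by rw [sub_eq_zero.mp h])
  have hmul : π ^ 2 - t ^ 2 = (t + π) * (π - t) := by ring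
  have hsplit (u : ℝ) : minorantProfile u * cos (t * u) =
      (1 - u) * cos ((t + π) * u) / 2 + (1 - u) * cos ((π - t) * u) / 2
        + (sin ((t + π) * u) / π + sin ((π - t) * u) / π) := by
    simp only [minorantProfile, add_mul, sub_mul π t u, cos_add, cos_sub, sin_add, sin_sub]
    ring
  simp_rw [minorantKernel, hsplit]
  rw [intervalIntegral.integral_add, intervalIntegral.integral_add, intervalIntegral.integral_add]
  · simp only [intervalIntegral.integral_div, integral_one_sub_mul_cos hadd,
      integral_one_sub_mul_cos hsub, integral_sin_const_mul hadd, integral_sin_const_mul hsub,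
      cos_add_pi, cos_pi_sub, hmul]
    field_simp
    ring
  all_goals exact Continuous.intervalIntegrable (by fun_prop) _ _

lemma continuous_minorantKernel : Continuous minorantKernel :=
  intervalIntegral.continuous_parametric_intervalIntegral_of_continuous' (by fun_prop) _ _

lemma minorantKernel_nonpos {t : ℝ} (ht : 2 * π ≤ |t|) : minorantKernel t ≤ 0 := by
  have hsq : 4 * π ^ 2 ≤ t ^ 2 := by
    rw [← sq_abs t]
    nlinarith [pi_pos]
  rw [minorantKernel_eq (by nlinarith [pi_pos])]
  refine div_nonpos_of_nonpos_of_nonneg (mul_nonpos_of_nonneg_of_nonpos ?_ ?_) (sq_nonneg _)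
  · linarith [neg_one_le_cos t]
  · nlinarith [pi_pos]

lemma minorantKernel_isBigO : minorantKernel =O[cocompact ℝ] fun t ↦ (1 + t ^ 2)⁻¹ := by
  refine Asymptotics.IsBigO.of_bound 6 ?_
  filter_upwards [tendsto_norm_cocompact_atTop.eventually_ge_atTop (2 * π)] with t ht
  have hsq : 4 * π ^ 2 ≤ t ^ 2 := by
    rw [← sq_abs t, ← norm_eq_abs]
    nlinarith [pi_pos]
  have hpi : 9 < π ^ 2 := by nlinarith [pi_gt_three]
  rw [norm_of_nonpos (minorantKernel_nonpos ht), norm_of_nonneg (by positivity),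
    minorantKernel_eq (by linarith), ← neg_div, ← div_eq_mul_inv,
    div_le_div_iff₀ (by nlinarith) (by positivity)]
  have hcos : (1 + cos t) * (t ^ 2 - 3 * π ^ 2) ≤ 2 * (t ^ 2 - π ^ 2) :=
    mul_le_mul (by linarith [cos_le_one t]) (by linarith) (by linarith) two_pos.le
  nlinarith

lemma integrable_minorantKernel : Integrable minorantKernel := by
  refine continuous_minorantKernel.locallyIntegrable.integrable_of_isBigO_cocompact
    minorantKernel_isBigO ⟨Set.univ, univ_mem, ?_⟩
  exact integrable_inv_one_add_sq.integrableOn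

/-- The even extension of `minorantProfile` from `[0, 1]` to `[-1, 1]`, continued by `0`; the
profile vanishes at `1`, so clamping its argument at `1` achieves this. -/
def minorantWindow (u : ℝ) : ℝ :=
  minorantProfile (min |u| 1)

lemma continuous_minorantWindow : Continuous minorantWindow := by
  unfold minorantWindow
  fun_prop

lemma minorantWindow_of_one_le_abs {u : ℝ} (hu : 1 ≤ |u|) : minorantWindow u = 0 := by
  simp [minorantWindow, minorantProfile, min_eq_right hu]

lemma hasCompactSupport_minorantWindow : HasCompactSupport minorantWindow :=
  .intro (isCompact_Icc (a := (-1 : ℝ)) (b := 1)) fun _ hu ↦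
    minorantWindow_of_one_le_abs (not_lt.mp fun h ↦ hu (abs_le.mp h.le))

lemma fourier_ofReal_of_even {g : ℝ → ℝ} (hg : Integrable g) (heven : g.Even) (t : ℝ) :
    𝓕 (fun u ↦ (g u : ℂ)) t = ↑(∫ u, g u * cos (2 * π * t * u)) := by
  have hodd : ∫ u, g u * sin (2 * π * t * u) = 0 := by
    have := integral_neg_eq_self (fun u ↦ g u * sin (2 * π * t * u)) volume
    simp only [heven _, mul_neg, sin_neg, integral_neg] at this
    linarith
  have hcos : Integrable fun u ↦ g u * cos (2 * π * t * u) :=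
    hg.mul_bdd (c := 1) (by fun_prop) (.of_forall fun u ↦ abs_cos_le_one _)
  have hsin : Integrable fun u ↦ g u * sin (2 * π * t * u) :=
    hg.mul_bdd (c := 1) (by fun_prop) (.of_forall fun u ↦ abs_sin_le_one _)
  have hexp (u : ℝ) : Complex.exp (↑(-2 * π * u * t) * Complex.I) • (g u : ℂ) =
      ↑(g u * cos (2 * π * t * u)) - ↑(g u * sin (2 * π * t * u)) * Complex.I := by
    rw [show -2 * π * u * t = -(2 * π * t * u) by ring, Complex.exp_mul_I, ← Complex.ofReal_cos,
      ← Complex.ofReal_sin, cos_neg, sin_neg, smul_eq_mul]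
    push_cast
    ring
  simp_rw [Real.fourier_real_eq_integral_exp_smul, hexp]
  rw [integral_sub hcos.ofReal (hsin.ofReal.mul_const _), integral_mul_const,
    integral_complex_ofReal, integral_complex_ofReal, hodd, Complex.ofReal_zero, zero_mul, sub_zero]

lemma fourier_minorantWindow (t : ℝ) :
    𝓕 (fun u ↦ (minorantWindow u : ℂ)) t = ↑(2 * minorantKernel (2 * π * t)) := by
  have heven : minorantWindow.Even := fun u ↦ by simp [minorantWindow]
  have habs (u : ℝ) : minorantWindow u * cos (2 * π * t * u) =
      minorantWindow |u| * cos (2 * π * t * |u|) := by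
    rw [← cos_abs (2 * π * t * u), ← cos_abs (2 * π * t * |u|), abs_mul, abs_mul _ |u|, abs_abs,
      minorantWindow, minorantWindow, abs_abs]
  rw [fourier_ofReal_of_even (continuous_minorantWindow.integrable_of_hasCompactSupport
    hasCompactSupport_minorantWindow) heven]
  rw [integral_congr_ae (ae_of_all _ habs),
    integral_comp_abs (f := fun u ↦ minorantWindow u * cos (2 * π * t * u)),
    setIntegral_eq_of_subset_of_forall_sdiff_eq_zero measurableSet_Ioi
      (Set.Ioc_subset_Ioi_self (a := (1 : ℝ))), minorantKernel,
    intervalIntegral.integral_of_le zero_le_one]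
  · congr 2
    refine setIntegral_congr_fun measurableSet_Ioc fun u hu ↦ ?_
    simp only [minorantWindow, abs_of_pos hu.1, min_eq_left hu.2]
  · intro u hu
    have : 1 ≤ |u| := (not_le.mp fun h ↦ hu.2 ⟨hu.1, h⟩).le.trans (le_abs_self u)
    simp [minorantWindow_of_one_le_abs this]

lemma fourier_comp_mul_left {E : Type*} [NormedAddCommGroup E] [NormedSpace ℂ E] (f : ℝ → E)
    {δ : ℝ} (hδ : δ ≠ 0) (t : ℝ) : 𝓕 (fun u ↦ f (δ * u)) t = |δ⁻¹| • 𝓕 f (t / δ) := by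
  simp_rw [Real.fourier_real_eq_integral_exp_smul]
  rw [← Measure.integral_comp_mul_left]
  congr with u
  congr 3
  field_simp

theorem exists_fourier_eq_nonpos_of_le_abs {δ : ℝ} (hδ : 0 < δ) :
    ∃ (f : ℝ → ℂ) (φ : ℝ → ℝ), Continuous f ∧ HasCompactSupport f ∧ (∀ t, 𝓕 f t = φ t) ∧
      Integrable φ ∧ 0 < ∫ t, φ t ∧ ∀ t, δ ≤ |t| → φ t ≤ 0 := by
  set w : ℝ → ℂ := fun u ↦ (minorantWindow u : ℂ)
  have hw : Continuous w := Complex.continuous_ofReal.comp continuous_minorantWindow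
  have hwsupp : HasCompactSupport w :=
    hasCompactSupport_minorantWindow.comp_left Complex.ofReal_zero
  set f : ℝ → ℂ := fun u ↦ w (δ * u)
  set φ : ℝ → ℝ := fun t ↦ δ⁻¹ * (2 * minorantKernel (2 * π * (t / δ)))
  have hf : Continuous f := by fun_prop
  have hfsupp : HasCompactSupport f :=
    hwsupp.comp_homeomorph (Homeomorph.mulLeft₀ δ hδ.ne')
  have hfourier (t : ℝ) : 𝓕 f t = φ t := by
    rw [fourier_comp_mul_left w hδ.ne', abs_of_pos (inv_pos.mpr hδ), fourier_minorantWindow,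
      Complex.real_smul, ← Complex.ofReal_mul]
  have hφ : Integrable φ :=
    (((integrable_minorantKernel.comp_mul_left' two_pi_pos.ne').comp_div hδ.ne').const_mul
      _).const_mul _
  have hfourier' : 𝓕 f = fun t ↦ (φ t : ℂ) := funext hfourier
  have hinv : ∫ t, φ t = 1 := by
    have := congr_fun (hf.fourierInv_fourier_eq (hf.integrable_of_hasCompactSupport hfsupp)
      (hfourier' ▸ hφ.ofReal)) 0
    rw [Real.fourierInv_eq', hfourier'] at this
    simpa [f, w, minorantWindow, minorantProfile, integral_complex_ofReal] using this
  refine ⟨f, φ, hf, hfsupp, hfourier, hφ, ?_, fun t ht ↦ ?_⟩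
  · exact hinv ▸ one_pos
  · have : 2 * π ≤ |2 * π * (t / δ)| := by
      rw [abs_mul, abs_div, abs_of_pos hδ, abs_of_pos two_pi_pos]
      exact le_mul_of_one_le_right two_pi_pos.le ((one_le_div hδ).mpr ht)
    exact mul_nonpos_of_nonneg_of_nonpos (by positivity)
      (mul_nonpos_of_nonneg_of_nonpos two_pos.le (minorantKernel_nonpos this))

end MinorantKernel

section Tauberian

/-- The bilateral Laplace transform `s ↦ ∫ exp (-s v) dμ(v)` of a measure on the line; it is `0`
when the integral diverges. -/
def laplace (μ : Measure ℝ) (s : ℂ) : ℂ :=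
  ∫ v : ℝ, Complex.exp (-s * v) ∂μ

lemma laplace_volume_restrict_Ioi {s : ℂ} (hs : 0 < s.re) :
    laplace (volume.restrict (Set.Ioi 0)) s = 1 / s := by
  rw [laplace, integral_exp_mul_complex_Ioi (by simpa using hs)]
  simp

lemma continuous_fourier_of_integrable {E : Type*} [NormedAddCommGroup E] [NormedSpace ℂ E]
    {f : ℝ → E} (hf : Integrable f) : Continuous (𝓕 f) :=
  VectorFourier.fourierIntegral_continuous Real.continuous_fourierChar continuous_inner hf

lemma norm_fourier_le_integral_norm {E : Type*} [NormedAddCommGroup E] [NormedSpace ℂ E]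
    (f : ℝ → E) (t : ℝ) : ‖𝓕 f t‖ ≤ ∫ u, ‖f u‖ :=
  VectorFourier.norm_fourierIntegral_le_integral_norm _ _ _ _ _

lemma fourier_const_mul_add {f g : ℝ → ℂ} (hf : Integrable f) (hg : Integrable g) (c : ℂ) (t : ℝ) :
    𝓕 (fun u ↦ c * f u + g u) t = c * 𝓕 f t + 𝓕 g t := by
  have hadd := VectorFourier.fourierIntegral_add Real.continuous_fourierChar
    (L := innerₗ ℝ) continuous_inner (hf.const_mul c) hg
  have hmul := VectorFourier.fourierIntegral_const_smul Real.fourierChar volume (innerₗ ℝ) f c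
  exact (congr_fun hadd t).trans (congr_arg (· + 𝓕 g t) (congr_fun hmul t))

lemma integrable_fourier_sub_mul_exp {μ : Measure ℝ} {f : ℝ → ℂ} (hf : Integrable f) {ε : ℝ}
    (hμ : Integrable (fun v ↦ exp (-ε * v)) μ) (y : ℝ) :
    Integrable (fun v ↦ 𝓕 f (v - y) * (exp (-ε * v) : ℂ)) μ :=
  hμ.ofReal.bdd_mul (c := ∫ u, ‖f u‖)
    ((continuous_fourier_of_integrable hf).comp (continuous_sub_right y)).aestronglyMeasurable
    (.of_forall fun _ ↦ norm_fourier_le_integral_norm f _)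

lemma integral_fourier_sub_mul_exp {μ : Measure ℝ} [SFinite μ] {f : ℝ → ℂ} (hf : Integrable f)
    {ε : ℝ} (hμ : Integrable (fun v ↦ exp (-ε * v)) μ) (y : ℝ) :
    ∫ v, 𝓕 f (v - y) * (exp (-ε * v) : ℂ) ∂μ =
      𝓕 (fun u ↦ f u * laplace μ (ε + 2 * π * u * Complex.I)) (-y) := by
  have hexp (v u : ℝ) : Complex.exp (↑(-2 * π * u * (v - y)) * Complex.I) * f u *
      (exp (-ε * v) : ℂ) = Complex.exp (↑(-2 * π * u * -y) * Complex.I) *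
        (f u * Complex.exp (-(ε + 2 * π * u * Complex.I) * v)) := by
    push_cast
    rw [mul_right_comm, mul_left_comm (Complex.exp _) (f u), ← Complex.exp_add, mul_comm (f u),
      ← Complex.exp_add]
    ring_nf
  have hμ' : Integrable (fun v ↦ (exp (-ε * v) : ℂ)) μ := hμ.ofReal
  have hint : Integrable (Function.uncurry fun v u : ℝ ↦
      Complex.exp (↑(-2 * π * u * (v - y)) * Complex.I) * f u * (exp (-ε * v) : ℂ))
      (μ.prod volume) := by
    refine ((hμ'.mul_prod hf).bdd_mul (c := 1)
      (f := fun z ↦ Complex.exp (↑(-2 * π * z.2 * (z.1 - y)) * Complex.I))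
      (by fun_prop) (.of_forall fun z ↦ (Complex.norm_exp_ofReal_mul_I _).le)).congr
      (.of_forall fun z ↦ ?_)
    simp only [Function.uncurry]
    ring
  simp_rw [Real.fourier_real_eq_integral_exp_smul, smul_eq_mul, ← integral_mul_const, laplace,
    ← integral_const_mul, ← hexp]
  exact integral_integral_swap hint

variable {μ : Measure ℝ} {A : ℝ} {G : ℂ → ℂ} {f : ℝ → ℂ}

lemma continuousOn_mul_comp_line (hf : Continuous f) (hG : ContinuousOn G {s | 0 ≤ s.re}) :
    ContinuousOn (fun p : ℝ × ℝ ↦ f p.2 * G (p.1 + 2 * π * p.2 * Complex.I))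
      (Set.Ici 0 ×ˢ Set.univ) :=
  (hf.comp continuous_snd).continuousOn.mul
    (hG.comp (by fun_prop) fun p hp ↦ by simpa using hp)

lemma integrable_mul_comp_line (hf : Continuous f) (hfsupp : HasCompactSupport f)
    {ε : ℝ} (hG : Continuous fun u : ℝ ↦ G (ε + 2 * π * u * Complex.I)) :
    Integrable fun u : ℝ ↦ f u * G (ε + 2 * π * u * Complex.I) :=
  (hf.mul hG).integrable_of_hasCompactSupport hfsupp.mul_right

lemma integral_fourier_sub_mul_exp_eq_add [SFinite μ]
    (hμ : ∀ ε : ℝ, 0 < ε → Integrable (fun v ↦ exp (-ε * v)) μ)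
    (hG : ContinuousOn G {s | 0 ≤ s.re})
    (hlap : Set.EqOn G (fun s ↦ laplace μ s - A / s) {s | 0 < s.re})
    (hf : Continuous f) (hfsupp : HasCompactSupport f) {ε : ℝ} (hε : 0 < ε) (y : ℝ) :
    ∫ v, 𝓕 f (v - y) * (exp (-ε * v) : ℂ) ∂μ =
      A * (∫ v in Set.Ioi 0, 𝓕 f (v - y) * (exp (-ε * v) : ℂ)) +
        𝓕 (fun u ↦ f u * G (ε + 2 * π * u * Complex.I)) (-y) := by
  have hfint : Integrable f := hf.integrable_of_hasCompactSupport hfsupp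
  have hre (u : ℝ) : 0 < ((ε : ℂ) + 2 * π * u * Complex.I).re := by simpa using hε
  have hline : Continuous fun u : ℝ ↦ (ε : ℂ) + 2 * π * u * Complex.I := by fun_prop
  have hGint : Integrable fun u ↦ f u * G (ε + 2 * π * u * Complex.I) :=
    integrable_mul_comp_line hf hfsupp
      (hG.comp_continuous hline fun u ↦ (hre u).le)
  have hinv : Integrable fun u : ℝ ↦ f u * (fun s ↦ 1 / s) (ε + 2 * π * u * Complex.I) :=
    integrable_mul_comp_line hf hfsupp
      (continuous_const.div hline fun u h ↦ (hre u).ne' (by simp [h]))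
  rw [integral_fourier_sub_mul_exp hfint (hμ ε hε),
    integral_fourier_sub_mul_exp hfint (exp_neg_integrableOn_Ioi 0 hε)]
  simp_rw [laplace_volume_restrict_Ioi (hre _)]
  rw [← fourier_const_mul_add hinv hGint]
  refine congr_fun (congr_arg 𝓕 (funext fun u ↦ ?_)) _
  rw [hlap (hre u)]
  ring

lemma tendsto_setIntegral_fourier_sub_mul_exp (hfint : Integrable (𝓕 f)) (y : ℝ) :
    Tendsto (fun ε : ℝ ↦ ∫ v in Set.Ioi 0, 𝓕 f (v - y) * (exp (-ε * v) : ℂ)) (𝓝[>] 0)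
      (𝓝 (∫ v in Set.Ioi (-y), 𝓕 f v)) := by
  have htrans : ∫ v in Set.Ioi (-y), 𝓕 f v = ∫ v in Set.Ioi 0, 𝓕 f (v - y) := by
    rw [← (measurePreserving_sub_right volume y).setIntegral_preimage_emb
      (Homeomorph.subRight y).measurableEmbedding]
    simp
  have hshift : Integrable fun v ↦ 𝓕 f (v - y) := hfint.comp_sub_right y
  rw [htrans]
  refine tendsto_integral_filter_of_dominated_convergence (fun v ↦ ‖𝓕 f (v - y)‖)
    (.of_forall fun ε ↦ hshift.1.restrict.mul (by fun_prop)) ?_ hshift.norm.restrict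
    (.of_forall fun v ↦ ?_)
  · filter_upwards [self_mem_nhdsWithin] with ε (hε : 0 < ε)
    filter_upwards [ae_restrict_mem measurableSet_Ioi] with v (hv : 0 < v)
    rw [norm_mul, Complex.norm_real, norm_of_nonneg (exp_pos _).le]
    exact mul_le_of_le_one_right (norm_nonneg _) (exp_le_one_iff.mpr (by nlinarith))
  · refine Tendsto.mono_left (Continuous.tendsto' (by fun_prop) _ _ ?_) nhdsWithin_le_nhds
    simp

lemma tendsto_fourier_mul_comp_line (hG : ContinuousOn G {s | 0 ≤ s.re})
    (hf : Continuous f) (hfsupp : HasCompactSupport f) (t : ℝ) :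
    Tendsto (fun ε : ℝ ↦ 𝓕 (fun u ↦ f u * G (ε + 2 * π * u * Complex.I)) t) (𝓝[>] 0)
      (𝓝 (𝓕 (fun u ↦ f u * G (2 * π * u * Complex.I)) t)) := by
  have hcont : ContinuousOn
      (fun ε : ℝ ↦ 𝓕 (fun u ↦ f u * G (ε + 2 * π * u * Complex.I)) t) (Set.Ici 0) := by
    simp_rw [Real.fourier_real_eq_integral_exp_smul]
    have hexp : Continuous fun p : ℝ × ℝ ↦ Complex.exp (↑(-2 * π * p.2 * t) * Complex.I) := by
      fun_prop
    refine continuousOn_integral_of_compact_support hfsupp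
      (hexp.continuousOn.smul (continuousOn_mul_comp_line hf hG)) fun ε u _ hu ↦ ?_
    simp [image_eq_zero_of_notMem_tsupport hu]
  simpa using (hcont 0 Set.self_mem_Ici).tendsto.mono_left
    (nhdsWithin_mono 0 Set.Ioi_subset_Ici_self)

/-- The limit of `∫ 𝓕 f (v - y) * exp (-ε * v) dμ(v)` as `ε → 0⁺`, for a measure `μ` whose Laplace
transform is `A / s + G s`: the integral of `𝓕 f (v - y)` against `A dv` on the positive half-line,
plus an oscillatory integral of the boundary values of `G`. -/
def smoothedLimit (A : ℝ) (G : ℂ → ℂ) (f : ℝ → ℂ) (y : ℝ) : ℂ :=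
  A * (∫ v in Set.Ioi (-y), 𝓕 f v) + 𝓕 (fun u ↦ f u * G (2 * π * u * Complex.I)) (-y)

lemma tendsto_integral_fourier_sub_mul_exp [SFinite μ]
    (hμ : ∀ ε : ℝ, 0 < ε → Integrable (fun v ↦ exp (-ε * v)) μ)
    (hG : ContinuousOn G {s | 0 ≤ s.re})
    (hlap : Set.EqOn G (fun s ↦ laplace μ s - A / s) {s | 0 < s.re})
    (hf : Continuous f) (hfsupp : HasCompactSupport f) (hfint : Integrable (𝓕 f)) (y : ℝ) :
    Tendsto (fun ε : ℝ ↦ ∫ v, 𝓕 f (v - y) * (exp (-ε * v) : ℂ) ∂μ) (𝓝[>] 0)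
      (𝓝 (smoothedLimit A G f y)) := by
  refine Tendsto.congr' ?_ (((tendsto_setIntegral_fourier_sub_mul_exp hfint y).const_mul
    (A : ℂ)).add (tendsto_fourier_mul_comp_line hG hf hfsupp (-y)))
  filter_upwards [self_mem_nhdsWithin] with ε (hε : 0 < ε)
  exact (integral_fourier_sub_mul_exp_eq_add hμ hG hlap hf hfsupp hε y).symm

lemma tendsto_smoothedLimit_atTop (hfint : Integrable (𝓕 f)) :
    Tendsto (smoothedLimit A G f) atTop (𝓝 (A * ∫ v, 𝓕 f v)) := by
  have hmain : Tendsto (fun y : ℝ ↦ ∫ v in Set.Ioi (-y), 𝓕 f v) atTop (𝓝 (∫ v, 𝓕 f v)) :=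
    (aecover_Ioi tendsto_neg_atTop_atBot).integral_tendsto_of_countably_generated hfint
  have hzero : Tendsto (fun y : ℝ ↦ 𝓕 (fun u ↦ f u * G (2 * π * u * Complex.I)) (-y)) atTop
      (𝓝 0) :=
    (Real.zero_at_infty_fourier _).comp
      (tendsto_neg_atTop_atBot.mono_right _root_.atBot_le_cocompact)
  unfold smoothedLimit
  simpa only [add_zero] using (hmain.const_mul (A : ℂ)).add hzero

lemma measure_closedBall_lt_top_of_integrable_exp {a : ℝ} (hμ : Integrable (fun v ↦ exp (a * v)) μ)
    (y δ : ℝ) : μ (Metric.closedBall y δ) < ⊤ := by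
  refine (measure_mono fun v hv ↦ ?_).trans_lt
    (hμ.measure_norm_ge_lt_top (exp_pos (a * y - |a| * δ)))
  have hmul : |a * (v - y)| ≤ |a| * δ := by
    rw [abs_mul, ← dist_eq]
    exact mul_le_mul_of_nonneg_left (Metric.mem_closedBall.mp hv) (abs_nonneg a)
  rw [Set.mem_ofPred_eq, norm_of_nonneg (exp_pos _).le, exp_le_exp]
  linarith [neg_le_of_abs_le hmul]

lemma integral_mul_exp_le {φ : ℝ → ℝ} {δ ε C y : ℝ} (hε : 0 ≤ ε) (hy : δ ≤ y)
    (hφC : ∀ t, φ t ≤ C) (hC : 0 ≤ C) (hφδ : ∀ t, δ ≤ |t| → φ t ≤ 0)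
    (hball : μ (Metric.closedBall y δ) < ⊤)
    (hint : Integrable (fun v ↦ φ (v - y) * exp (-ε * v)) μ) :
    ∫ v, φ (v - y) * exp (-ε * v) ∂μ ≤ C * μ.real (Metric.closedBall y δ) := by
  have hind : ∫ v, (Metric.closedBall y δ).indicator (fun _ ↦ C) v ∂μ =
      C * μ.real (Metric.closedBall y δ) := by
    rw [integral_indicator_const _ Metric.isClosed_closedBall.measurableSet, smul_eq_mul, mul_comm]
  rw [← hind]
  refine integral_mono hint ((integrable_indicator_iff
    Metric.isClosed_closedBall.measurableSet).mpr (integrableOn_const hball.ne)) fun v ↦ ?_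
  by_cases hv : v ∈ Metric.closedBall y δ
  · rw [Set.indicator_of_mem hv]
    rw [Metric.mem_closedBall, dist_eq, abs_le] at hv
    exact (mul_le_mul_of_nonneg_right (hφC _) (exp_pos _).le).trans
      (mul_le_of_le_one_right hC (exp_le_one_iff.mpr (by nlinarith)))
  · rw [Set.indicator_of_notMem hv]
    rw [Metric.mem_closedBall, dist_eq, not_le] at hv
    exact mul_nonpos_of_nonpos_of_nonneg (hφδ _ hv.le) (exp_pos _).le

theorem exists_pos_eventually_le_measureReal_closedBall [SFinite μ] (hA : 0 < A)
    (hμ : ∀ ε : ℝ, 0 < ε → Integrable (fun v ↦ exp (-ε * v)) μ)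
    (hG : ContinuousOn G {s | 0 ≤ s.re})
    (hlap : Set.EqOn G (fun s ↦ laplace μ s - A / s) {s | 0 < s.re}) {δ : ℝ} (hδ : 0 < δ) :
    ∃ c > 0, ∀ᶠ y in atTop, c ≤ μ.real (Metric.closedBall y δ) := by
  obtain ⟨f, φ, hf, hfsupp, hfφ, hφ, hφpos, hφδ⟩ := exists_fourier_eq_nonpos_of_le_abs hδ
  have hfint : Integrable f := hf.integrable_of_hasCompactSupport hfsupp
  have hfφ' : 𝓕 f = fun t ↦ (φ t : ℂ) := funext hfφ
  obtain ⟨C, hC, hφC⟩ : ∃ C > 0, ∀ t, φ t ≤ C := by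
    refine ⟨(∫ u, ‖f u‖) + 1, by positivity, fun t ↦ (le_abs_self _).trans ?_⟩
    rw [← norm_eq_abs, ← Complex.norm_real, ← hfφ]
    exact (norm_fourier_le_integral_norm f t).trans (le_add_of_nonneg_right zero_le_one)
  have hlim_le (y : ℝ) (hy : δ ≤ y) :
      (smoothedLimit A G f y).re ≤ C * μ.real (Metric.closedBall y δ) := by
    have hlim := (Complex.continuous_re.tendsto _).comp
      (tendsto_integral_fourier_sub_mul_exp hμ hG hlap hf hfsupp (hfφ' ▸ hφ.ofReal) y)
    refine le_of_tendsto hlim ?_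
    filter_upwards [self_mem_nhdsWithin] with ε (hε : 0 < ε)
    have hintε := integrable_fourier_sub_mul_exp hfint (hμ ε hε) y
    simp only [hfφ, ← Complex.ofReal_mul] at hintε
    simp only [Function.comp_apply, hfφ, ← Complex.ofReal_mul, integral_complex_ofReal,
      Complex.ofReal_re]
    exact integral_mul_exp_le hε.le hy hφC hC.le hφδ
      (measure_closedBall_lt_top_of_integrable_exp (hμ 1 one_pos) y δ) hintε.re
  have hlim : Tendsto (fun y ↦ (smoothedLimit A G f y).re) atTop (𝓝 (A * ∫ t, φ t)) := by
    have := (Complex.continuous_re.tendsto _).comp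
      (tendsto_smoothedLimit_atTop (A := A) (G := G) (hfφ' ▸ hφ.ofReal : Integrable (𝓕 f)))
    simpa only [hfφ, integral_complex_ofReal, ← Complex.ofReal_mul, Complex.ofReal_re,
      Function.comp_def] using this
  have hpos : 0 < A * ∫ t, φ t := mul_pos hA hφpos
  refine ⟨(A * ∫ t, φ t) / 2 / C, by positivity, ?_⟩
  filter_upwards [hlim.eventually_const_le (half_lt_self hpos), eventually_ge_atTop δ] with y hy hδy
  exact (div_le_iff₀' hC).mpr (hy.trans (hlim_le y hδy))

end Tauberian

section DirichletSeries

/-- The measure with mass `a n / n` at `log n` for `n ≥ 1` (the term `n = 0` has mass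
`a 0 / 0 = 0`); its Laplace transform at `s` is the Dirichlet series of `a` at `s + 1`. -/
def logMeasure (a : ℕ → ℝ) : Measure ℝ :=
  .sum fun n ↦ ENNReal.ofReal (a n / n) • .dirac (log n)

instance (a : ℕ → ℝ) : SFinite (logMeasure a) := by
  unfold logMeasure
  infer_instance

variable {a : ℕ → ℝ}

lemma div_mul_cexp_neg_mul_log (n : ℕ) (s : ℂ) :
    (a n / n : ℂ) * Complex.exp (-s * log n) = LSeries.term (fun n ↦ (a n : ℂ)) (s + 1) n := by
  rcases eq_or_ne n 0 with rfl | hn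
  · simp
  · have hn' : (n : ℂ) ≠ 0 := Nat.cast_ne_zero.mpr hn
    rw [LSeries.term_of_ne_zero hn, Complex.cpow_add _ _ hn', Complex.cpow_one,
      Complex.cpow_def_of_ne_zero hn', ← Complex.natCast_log, neg_mul, Complex.exp_neg, mul_comm s]
    field_simp

lemma laplace_logMeasure (ha : ∀ n, 0 ≤ a n) (s : ℂ) :
    laplace (logMeasure a) s = LSeries (fun n ↦ (a n : ℂ)) (s + 1) := by
  rw [laplace, logMeasure, integral_sum_dirac fun _ ↦ ENNReal.ofReal_ne_top, LSeries]
  refine tsum_congr fun n ↦ ?_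
  rw [ENNReal.toReal_ofReal (div_nonneg (ha n) n.cast_nonneg), ← div_mul_cexp_neg_mul_log,
    Complex.real_smul, Complex.ofReal_div, Complex.ofReal_natCast]

lemma integrable_exp_logMeasure (ha : ∀ n, 0 ≤ a n) {ε : ℝ}
    (hsum : LSeriesSummable (fun n ↦ (a n : ℂ)) (ε + 1)) :
    Integrable (fun v ↦ exp (-ε * v)) (logMeasure a) := by
  refine integrable_sum_dirac (fun _ ↦ ENNReal.ofReal_ne_top) (hsum.norm.congr fun n ↦ ?_)
  rw [← div_mul_cexp_neg_mul_log, ENNReal.toReal_ofReal (div_nonneg (ha n) n.cast_nonneg)]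
  simp [Complex.norm_exp, Complex.log_re, abs_of_nonneg (ha n)]

lemma logMeasure_Ioc_log {x z : ℝ} (hx : 0 < x) (hz : 0 < z) :
    logMeasure a (Set.Ioc (log x) (log z)) =
      ∑ n ∈ Finset.Ioc ⌊x⌋₊ ⌊z⌋₊, ENNReal.ofReal (a n / n) := by
  have hmem {n : ℕ} (hn : n ≠ 0) :
      log n ∈ Set.Ioc (log x) (log z) ↔ n ∈ Finset.Ioc ⌊x⌋₊ ⌊z⌋₊ := by
    have hn' : (0 : ℝ) < n := by positivity
    rw [Set.mem_Ioc, Finset.mem_Ioc, log_lt_log_iff hx hn', log_le_log_iff hn' hz,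
      Nat.floor_lt hx.le, Nat.le_floor_iff hz.le]
  rw [logMeasure, Measure.sum_apply _ measurableSet_Ioc, tsum_eq_sum fun n hn ↦ ?_]
  · refine Finset.sum_congr rfl fun n hn ↦ ?_
    have hn0 : n ≠ 0 := ((Nat.zero_le _).trans_lt (Finset.mem_Ioc.mp hn).1).ne'
    simp [(hmem hn0).mpr hn]
  · rcases eq_or_ne n 0 with rfl | hn0
    · simp
    · simp [mt (hmem hn0).mp hn]

lemma measureReal_logMeasure_le (ha : ∀ n, 0 ≤ a n) {x z : ℝ} (hx : 0 < x) (hz : 0 < z)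
    {S : Set ℝ} (hS : S ⊆ Set.Ioc (log x) (log z)) :
    (logMeasure a).real S ≤ (∑ n ∈ Finset.Ioc ⌊x⌋₊ ⌊z⌋₊, a n) / x := by
  have hIoc := logMeasure_Ioc_log (a := a) hx hz
  have hfin : logMeasure a (Set.Ioc (log x) (log z)) ≠ ⊤ := by
    simp [hIoc]
  refine (measureReal_mono hS hfin).trans ?_
  rw [measureReal_def, hIoc, ENNReal.toReal_sum fun _ _ ↦ ENNReal.ofReal_ne_top, Finset.sum_div]
  refine Finset.sum_le_sum fun n hn ↦ ?_
  rw [ENNReal.toReal_ofReal (div_nonneg (ha n) n.cast_nonneg)]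
  exact div_le_div_of_nonneg_left (ha n) hx
    ((Nat.floor_lt hx.le).mp (Finset.mem_Ioc.mp hn).1).le

theorem exists_pos_eventually_mul_le_sum_Ioc_of_LSeries (ha : ∀ n, 0 ≤ a n)
    (hsum : ∀ s : ℂ, 1 < s.re → LSeriesSummable (fun n ↦ (a n : ℂ)) s) {A : ℝ} (hA : 0 < A)
    {G : ℂ → ℂ} (hG : ContinuousOn G {s | 1 ≤ s.re})
    (hGa : Set.EqOn G (fun s ↦ LSeries (fun n ↦ (a n : ℂ)) s - A / (s - 1)) {s | 1 < s.re})
    {r : ℝ} (hr : 1 < r) :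
    ∃ c > 0, ∀ᶠ x : ℝ in atTop, c * x ≤ ∑ n ∈ Finset.Ioc ⌊x⌋₊ ⌊r * x⌋₊, a n := by
  have hlogr : 0 < log r := log_pos hr
  obtain ⟨c, hc, hball⟩ := exists_pos_eventually_le_measureReal_closedBall
    (μ := logMeasure a) (G := fun s ↦ G (s + 1)) (δ := log r / 4) hA
    (fun ε hε ↦ integrable_exp_logMeasure ha (hsum _ (by simpa using hε)))
    (hG.comp (by fun_prop) fun s hs ↦ by simpa using hs)
    (fun s (hs : 0 < s.re) ↦ by
      simp [hGa (show 1 < (s + 1).re by simpa using hs), laplace_logMeasure ha])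
    (by positivity)
  refine ⟨c, hc, ?_⟩
  have hmid : Tendsto (fun x ↦ log x + log r / 2) atTop atTop :=
    tendsto_atTop_add_const_right _ _ tendsto_log_atTop
  filter_upwards [hmid.eventually hball, eventually_gt_atTop 0] with x hcx hx
  have hsub : Metric.closedBall (log x + log r / 2) (log r / 4) ⊆
      Set.Ioc (log x) (log (r * x)) := by
    rw [Real.closedBall_eq_Icc, log_mul (by positivity) hx.ne']
    exact fun v hv ↦ ⟨by linarith [hv.1], by linarith [hv.2]⟩
  exact (le_div_iff₀ hx).mp
    (hcx.trans (measureReal_logMeasure_le ha hx (by positivity) hsub))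

end DirichletSeries

section Primes

open ArithmeticFunction.vonMangoldt Chebyshev

lemma residueClass_one_zmod_one : residueClass (1 : ZMod 1) = fun n ↦ Λ n := by
  ext n
  simp [residueClass, Set.indicator, Subsingleton.elim (n : ZMod 1) 1]

theorem exists_pos_eventually_mul_le_sum_vonMangoldt {r : ℝ} (hr : 1 < r) :
    ∃ c > 0, ∀ᶠ x : ℝ in atTop, c * x ≤ ∑ n ∈ Finset.Ioc ⌊x⌋₊ ⌊r * x⌋₊, Λ n := by
  refine exists_pos_eventually_mul_le_sum_Ioc_of_LSeries (A := 1)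
    (fun _ ↦ ArithmeticFunction.vonMangoldt_nonneg)
    (fun s hs ↦ ArithmeticFunction.LSeriesSummable_vonMangoldt hs) one_pos
    (continuousOn_LFunctionResidueClassAux (1 : ZMod 1)) (fun s hs ↦ ?_) hr
  rw [eqOn_LFunctionResidueClassAux isUnit_one hs, residueClass_one_zmod_one]
  simp

lemma psi_sub_psi_eq_sum_Ioc {x y : ℝ} (hxy : x ≤ y) :
    ψ y - ψ x = ∑ n ∈ Finset.Ioc ⌊x⌋₊ ⌊y⌋₊, Λ n := by
  rw [psi, psi, sub_eq_iff_eq_add',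
    Finset.sum_Ioc_consecutive _ (Nat.zero_le _) (Nat.floor_mono hxy)]

lemma theta_sub_theta_eq_sum_Ioc {x y : ℝ} (hxy : x ≤ y) :
    θ y - θ x = ∑ p ∈ Finset.Ioc ⌊x⌋₊ ⌊y⌋₊ with p.Prime, log p := by
  simp only [theta, Finset.sum_filter]
  rw [sub_eq_iff_eq_add',
    Finset.sum_Ioc_consecutive _ (Nat.zero_le _) (Nat.floor_mono hxy)]

theorem exists_pos_eventually_mul_le_theta_sub_theta {r : ℝ} (hr : 1 < r) :
    ∃ c > 0, ∀ᶠ x : ℝ in atTop, c * x ≤ θ (r * x) - θ x := by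
  obtain ⟨c, hc, hΛ⟩ := exists_pos_eventually_mul_le_sum_vonMangoldt hr
  obtain ⟨C, hC⟩ := psi_sub_theta_le_mul_sqrt
  have hsqrt : ∀ᶠ x : ℝ in atTop, C * √(r * x) ≤ c / 2 * x := by
    filter_upwards [tendsto_sqrt_atTop.eventually_ge_atTop (C * √r / (c / 2)),
      eventually_ge_atTop 0] with x hx hx0
    calc C * √(r * x) = C * √r * √x := by rw [sqrt_mul (by positivity), mul_assoc]
      _ ≤ c / 2 * √x * √x := by
        exact mul_le_mul_of_nonneg_right ((div_le_iff₀' (half_pos hc)).mp hx) (sqrt_nonneg x)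
      _ = c / 2 * x := by rw [mul_assoc, mul_self_sqrt hx0]
  refine ⟨c / 2, half_pos hc, ?_⟩
  filter_upwards [hΛ, hsqrt, eventually_ge_atTop 0] with x hx hCx hx0
  rw [← psi_sub_psi_eq_sum_Ioc (le_mul_of_one_le_left hx0 hr.le)] at hx
  linarith [hC (r * x), theta_le_psi x]

lemma eventually_mul_exp_neg_le_exp_div_pow {σ : ℝ} (hσ : σ < 1) (m : ℕ) :
    ∀ᶠ t : ℝ in atTop, t * exp (-t) ≤ exp (-σ * t) / t ^ m := by
  have hlittle := isLittleO_pow_exp_pos_mul_atTop (m + 1) (sub_pos.mpr hσ)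
  filter_upwards [hlittle.bound one_pos, eventually_gt_atTop 0] with t ht ht0
  rw [norm_of_nonneg (by positivity), norm_of_nonneg (by positivity), one_mul] at ht
  rw [le_div_iff₀ (by positivity)]
  calc t * exp (-t) * t ^ m = t ^ (m + 1) * exp (-t) := by ring
    _ ≤ exp ((1 - σ) * t) * exp (-t) := mul_le_mul_of_nonneg_right ht (exp_pos _).le
    _ = exp (-σ * t) := by rw [← exp_add]; ring_nf

lemma tendsto_sum_Ioc_zero {ι : Type*} {l : Filter ι} {g : ℕ → ℝ} (hg : Summable g)
    {u : ι → ℕ} (hu : Tendsto u l atTop) (v : ι → ℕ) :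
    Tendsto (fun i ↦ ∑ n ∈ Finset.Ioc (u i) (v i), g n) l (𝓝 0) := by
  refine fun e he ↦ mem_map.mpr ?_
  obtain ⟨s, hs⟩ := hg.vanishing he
  filter_upwards [hu.eventually_ge_atTop (s.sup id)] with i hi
  refine hs _ (Finset.disjoint_left.mpr fun n hn hns ↦ ?_)
  exact ((Finset.mem_Ioc.mp hn).1.trans_le (Finset.le_sup (f := id) hns)).not_ge hi

lemma tendsto_sum_filter_prime_Ioc_zero {g : ℕ → ℝ} (hg : Summable fun p : Nat.Primes ↦ g p)
    (r : ℝ) :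
    Tendsto (fun x : ℝ ↦ ∑ p ∈ Finset.Ioc ⌊x⌋₊ ⌊r * x⌋₊ with p.Prime, g p) atTop (𝓝 0) := by
  have hind : Summable ({p : ℕ | p.Prime}.indicator g) := summable_subtype_iff_indicator.mp hg
  simpa only [Finset.sum_filter, Set.indicator_apply, Set.mem_ofPred_eq] using
    tendsto_sum_Ioc_zero hind tendsto_nat_floor_atTop fun x ↦ ⌊r * x⌋₊

lemma eventually_exists_prime_le_exp {f : ℝ → ℝ} {σ : ℝ} (hσ : σ < 1) {m : ℕ}
    (hsum : Summable fun p : Nat.Primes ↦ f (log (p : ℕ)) / log (p : ℕ) ^ m) {r : ℝ} (hr : 1 < r) :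
    ∀ᶠ x : ℝ in atTop, ∃ p : ℕ, p ∈ Finset.Ioc ⌊x⌋₊ ⌊r * x⌋₊ ∧ p.Prime ∧
      f (log p) ≤ exp (-σ * log p) := by
  obtain ⟨c, hc, hθ⟩ := exists_pos_eventually_mul_le_theta_sub_theta hr
  have hwindow := (tendsto_sum_filter_prime_Ioc_zero (g := fun n ↦ f (log n) / log n ^ m)
    hsum r).eventually_lt_const (show 0 < c / r by positivity)
  have hexp := eventually_forall_ge_atTop.mpr (eventually_mul_exp_neg_le_exp_div_pow hσ m)
  filter_upwards [hθ, hwindow, tendsto_log_atTop.eventually hexp, eventually_gt_atTop 1]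
    with x hθx hsumx hexpx hx
  have hx0 : 0 < x := one_pos.trans hx
  by_contra! hlarge
  refine hsumx.not_ge ?_
  have hterm (p : ℕ) (hp' : p ∈ Finset.Ioc ⌊x⌋₊ ⌊r * x⌋₊) (hprime : p.Prime) :
      log p / (r * x) ≤ f (log p) / log p ^ m := by
    have hp0 : (0 : ℝ) < p := Nat.cast_pos.mpr hprime.pos
    have hp : x < p ∧ p ≤ r * x := by
      rwa [Finset.mem_Ioc, Nat.floor_lt hx0.le, Nat.le_floor_iff (by positivity)] at hp'
    calc log p / (r * x) ≤ log p / p :=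
          div_le_div_of_nonneg_left (log_natCast_nonneg p) hp0 hp.2
      _ = log p * exp (-log p) := by rw [exp_neg, exp_log hp0, div_eq_mul_inv]
      _ ≤ exp (-σ * log p) / log p ^ m := hexpx _ (log_le_log hx0 hp.1.le)
      _ ≤ f (log p) / log p ^ m :=
          div_le_div_of_nonneg_right (hlarge p hp' hprime).le (pow_nonneg (log_natCast_nonneg p) m)
  calc c / r = c * x / (r * x) := by field_simp
    _ ≤ (θ (r * x) - θ x) / (r * x) := by gcongr
    _ = ∑ p ∈ Finset.Ioc ⌊x⌋₊ ⌊r * x⌋₊ with p.Prime, log p / (r * x) := by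
      rw [theta_sub_theta_eq_sum_Ioc (le_mul_of_one_le_left hx0.le hr.le), Finset.sum_div]
    _ ≤ _ := by
      refine Finset.sum_le_sum fun p hp ↦ ?_
      rw [Finset.mem_filter] at hp
      exact hterm p hp.1 hp.2

theorem eventually_exists_mem_Ioc_le_exp {f : ℝ → ℝ} {σ : ℝ} (hσ : σ < 1) {m : ℕ}
    (hsum : Summable fun p : Nat.Primes ↦ f (log (p : ℕ)) / log (p : ℕ) ^ m) {δ : ℝ} (hδ : 0 < δ) :
    ∀ᶠ y in atTop, ∃ t ∈ Set.Ioc (y - δ) (y + δ), f t ≤ exp (-σ * t) := by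
  have hx : Tendsto (fun y ↦ exp (y - δ)) atTop atTop :=
    tendsto_exp_atTop.comp (tendsto_atTop_add_const_right _ (-δ) tendsto_id)
  have hr : 1 < exp (2 * δ) := one_lt_exp_iff.mpr (by positivity)
  filter_upwards [hx.eventually (eventually_exists_prime_le_exp hσ hsum hr)]
    with y ⟨p, hp, hprime, hle⟩
  refine ⟨log p, ?_, hle⟩
  have hp0 : (0 : ℝ) < p := Nat.cast_pos.mpr hprime.pos
  rw [Finset.mem_Ioc, Nat.floor_lt (exp_pos _).le, Nat.le_floor_iff (by positivity), ← exp_add]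
    at hp
  exact ⟨(lt_log_iff_exp_lt hp0).mpr hp.1, (log_le_iff_le_exp hp0).mpr (hp.2.trans_eq (by ring_nf))⟩

theorem complement_of_small_value_set_finite_general {η σ : ℝ} (hη : 0 < η) (hσ : σ < 1) {m : ℕ}
    {f : ℝ → ℝ}
    (hsum : Summable fun p : Nat.Primes ↦ f (log (p : ℕ)) / log (p : ℕ) ^ m) :
    {n : ℕ | ¬ ∃ r ∈ Set.Ioc (((n : ℝ) - 1 / 4) * η) (((n : ℝ) + 1 / 4) * η),
      f r ≤ exp (-σ * r)}.Finite := by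
  have hmid : Tendsto (fun n : ℕ ↦ n * η) atTop atTop :=
    tendsto_natCast_atTop_atTop.atTop_mul_const hη
  have hev := hmid.eventually (eventually_exists_mem_Ioc_le_exp hσ hsum
    (show 0 < 1 / 4 * η by positivity))
  simp_rw [← sub_mul, ← add_mul] at hev
  rw [← Nat.cofinite_eq_atTop] at hev
  exact eventually_cofinite.mp hev

end Primes

end

theorem complement_of_small_value_set_finite
    (η σR : ℝ) (hη : 0 < η) (hσR : 0 < σR) (hσR' : σR < 1) (m : ℕ)
    (ρ : ℝ → ℂ) (hρ : ContinuousOn ρ (Set.Ici (0 : ℝ)))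
    (hsum : Summable (fun p : Nat.Primes =>
      ‖ρ (Real.log ((p : ℕ) : ℝ))‖ / (Real.log ((p : ℕ) : ℝ)) ^ m)) :
    {n : ℕ | 0 < n ∧
      ¬ ∃ r ∈ Set.Ioc (((n : ℝ) - 1 / 4) * η) (((n : ℝ) + 1 / 4) * η),
          ‖ρ r‖ ≤ Real.exp (-σR * r)}.Finite :=
  (complement_of_small_value_set_finite_general (f := fun r ↦ ‖ρ r‖) hη hσR' hsum).subset
    fun _ hn ↦ hn.2
end
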